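/- arXiv:2202.08872 — 8 statements merged into one kernel-verified Lean document; each statement's English description precedes it below -/
import Mathlib

section
/- Fix 0 < r < 1. Let H be a complex Hilbert space, J an invertible bounded linear operator on H belonging to 𝒬𝔸_r[H], K a complex Hilbert space, and F an invertible bounded linear operator on K with ‖F‖ ≤ r⁻¹ and ‖F⁻¹‖ ≤ r⁻¹. If V : H → K is a linear isometry such that Jⁿ = V* Fⁿ V for every integer n, then the range of V reduces F; that is, the range of V is invariant under both F and F*. (In other words, every element of 𝒬𝔸_r is dilation extremal in the quantum annulus ℚ𝔸_r.) -/
open ContinuousLinearMap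

noncomputable section

/-- `P` is an orthogonal projection: self-adjoint and idempotent. -/
def IsOrthProj {H : Type*} [NormedAddCommGroup H] [InnerProductSpace ℂ H] [CompleteSpace H]
    (P : H →L[ℂ] H) : Prop :=
  IsSelfAdjoint P ∧ P * P = P

/-- Membership in the dilation boundary `𝒬𝔸_r`: `J` is invertible and `J*J = r²P₊ + r⁻²P₋`
for orthogonal projections `P₊, P₋` summing to the identity. -/
def memQAscript (r : ℝ) {H : Type*} [NormedAddCommGroup H] [InnerProductSpace ℂ H]
    [CompleteSpace H] (J : H →L[ℂ] H) : Prop :=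
  IsUnit J ∧ ∃ Pp Pm : H →L[ℂ] H, IsOrthProj Pp ∧ IsOrthProj Pm ∧ Pp + Pm = 1 ∧
    adjoint J * J = ((r : ℂ) ^ 2) • Pp + ((r : ℂ)⁻¹ ^ 2) • Pm

/-! If `F` compresses to `J` along `V` and `‖F‖ ≤ c`, a vector `x` with `‖J x‖ = c ‖x‖` leaves no
room for `F (V x)` to have a component orthogonal to the range of `V`, so `F (V x) = V (J x)`.
Since `F` attains its norm bound at `V x`, also `F* (V (J x)) = F* F (V x) = c² V x`. For `J` in
`𝒬𝔸_r` every vector is a sum of one stretched by exactly `r⁻¹` under `J` and one whose image is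
stretched by exactly `r⁻¹` under `J⁻¹`, so applying this to `F` and to `F⁻¹` covers all of `H`. -/

lemma smul_add_smul_mul_eq_smul {R A : Type*} [Ring A] [SMulZeroClass R A]
    [IsScalarTower R A A] {p q : A} (hp : IsIdempotentElem p) (hpq : p + q = 1) (s t : R) :
    (s • p + t • q) * p = s • p := by
  rw [eq_sub_of_add_eq' hpq, add_mul, smul_mul_assoc, smul_mul_assoc, hp.eq, hp.one_sub_mul_self,
    smul_zero, add_zero]

section Isometry

variable {𝕜 H K : Type*} [RCLike 𝕜]
  [NormedAddCommGroup H] [InnerProductSpace 𝕜 H] [CompleteSpace H]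
  [NormedAddCommGroup K] [InnerProductSpace 𝕜 K] [CompleteSpace K]

lemma norm_apply_eq_of_adjoint_apply_apply_eq_smul {A : H →L[𝕜] K} {c : ℝ} (hc : 0 ≤ c) {x : H}
    (hx : adjoint A (A x) = (c : 𝕜) ^ 2 • x) : ‖A x‖ = c * ‖x‖ := by
  have hsq : ‖A x‖ ^ 2 = (c * ‖x‖) ^ 2 := by
    rw [apply_norm_sq_eq_inner_adjoint_right, comp_apply, hx, ← RCLike.ofReal_pow,
      inner_smul_right, RCLike.re_ofReal_mul, inner_self_eq_norm_sq, mul_pow]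
  exact (pow_left_inj₀ (norm_nonneg _) (by positivity) two_ne_zero).1 hsq

lemma adjoint_apply_apply_eq_smul_of_norm_apply_eq {A : H →L[𝕜] K} {c : ℝ} (hA : ‖A‖ ≤ c) {x : H}
    (hx : ‖A x‖ = c * ‖x‖) : adjoint A (A x) = (c : 𝕜) ^ 2 • x := by
  have hc : 0 ≤ c := (norm_nonneg A).trans hA
  have hnorm : ‖(c : 𝕜) ^ 2 • x‖ = c * ‖A x‖ := by
    rw [norm_smul, norm_pow, RCLike.norm_ofReal, abs_of_nonneg hc, hx]
    ring
  refine eq_of_norm_le_re_inner_eq_norm_sq (𝕜 := 𝕜) ?_ ?_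
  · rw [hnorm]
    exact (adjoint A).le_of_opNorm_le (by rwa [LinearIsometryEquiv.norm_map]) _
  · rw [hnorm, ← RCLike.ofReal_pow, inner_smul_right, RCLike.re_ofReal_mul, adjoint_inner_left,
      inner_self_eq_norm_sq, mul_pow]

variable {V : H →L[𝕜] K}

lemma eq_isometry_apply_of_norm_le (hV : ∀ x, ‖V x‖ = ‖x‖) {y : K} (hy : ‖y‖ ≤ ‖adjoint V y‖) :
    y = V (adjoint V y) := by
  refine eq_of_norm_le_re_inner_eq_norm_sq (𝕜 := 𝕜) (hy.trans_eq (hV _).symm) ?_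
  rw [← adjoint_inner_left, inner_self_eq_norm_sq, hV]

section Compression

variable {A : K →L[𝕜] K} {B : H →L[𝕜] H} {c : ℝ} {x : H}

lemma apply_isometry_eq_of_norm_compression_eq (hV : ∀ x, ‖V x‖ = ‖x‖)
    (hB : B = adjoint V ∘L A ∘L V) (hA : ‖A‖ ≤ c) (hx : ‖B x‖ = c * ‖x‖) :
    A (V x) = V (B x) := by
  subst hB
  refine eq_isometry_apply_of_norm_le hV ?_
  calc ‖A (V x)‖ ≤ c * ‖V x‖ := A.le_of_opNorm_le hA _
    _ = ‖adjoint V (A (V x))‖ := by rw [hV]; exact hx.symm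

lemma adjoint_apply_isometry_eq_of_norm_compression_eq (hV : ∀ x, ‖V x‖ = ‖x‖)
    (hB : B = adjoint V ∘L A ∘L V) (hA : ‖A‖ ≤ c) (hx : ‖B x‖ = c * ‖x‖) :
    adjoint A (V (B x)) = (c : 𝕜) ^ 2 • V x := by
  have hAV : A (V x) = V (B x) := apply_isometry_eq_of_norm_compression_eq hV hB hA hx
  rw [← hAV]
  exact adjoint_apply_apply_eq_smul_of_norm_apply_eq hA (by rw [hAV, hV, hV, hx])

end Compression

/-- The vectors at which an invertible operator `J` attains the bound `‖J‖ ≤ a`, or at whose image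
`J⁻¹` attains the bound `‖J⁻¹‖ ≤ c`. The second condition is written without `J⁻¹`, so that the
notion makes sense for every operator. -/
def extremalVectors (a c : ℝ) (J : H →L[𝕜] H) : Set H :=
  {x | ‖J x‖ = a * ‖x‖ ∨ ‖x‖ = c * ‖J x‖}

section Dilation

variable {J : H ≃L[𝕜] H} {F : K ≃L[𝕜] K} {a c : ℝ}

lemma apply_isometry_eq_of_mem_extremalVectors (hV : ∀ x, ‖V x‖ = ‖x‖)
    (hJ : (J : H →L[𝕜] H) = adjoint V ∘L (F : K →L[𝕜] K) ∘L V)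
    (hJinv : (J.symm : H →L[𝕜] H) = adjoint V ∘L (F.symm : K →L[𝕜] K) ∘L V)
    (hF : ‖(F : K →L[𝕜] K)‖ ≤ a) (hFinv : ‖(F.symm : K →L[𝕜] K)‖ ≤ c)
    {x : H} (hx : x ∈ extremalVectors a c (J : H →L[𝕜] H)) : F (V x) = V (J x) := by
  rcases hx with hx | hx
  · exact apply_isometry_eq_of_norm_compression_eq hV hJ hF hx
  · have hFsymm : F.symm (V (J x)) = V (J.symm (J x)) :=
      apply_isometry_eq_of_norm_compression_eq hV hJinv hFinv (by simpa using hx)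
    rw [J.symm_apply_apply] at hFsymm
    exact ((F.symm_apply_eq).1 hFsymm).symm

lemma adjoint_apply_isometry_mem_range_of_mem_extremalVectors (hV : ∀ x, ‖V x‖ = ‖x‖)
    (hJ : (J : H →L[𝕜] H) = adjoint V ∘L (F : K →L[𝕜] K) ∘L V)
    (hJinv : (J.symm : H →L[𝕜] H) = adjoint V ∘L (F.symm : K →L[𝕜] K) ∘L V)
    (hF : ‖(F : K →L[𝕜] K)‖ ≤ a) (hFinv : ‖(F.symm : K →L[𝕜] K)‖ ≤ c)
    {x : H} (hx : x ∈ extremalVectors a c (J : H →L[𝕜] H)) :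
    adjoint (F : K →L[𝕜] K) (V (J x)) ∈ V.range := by
  rcases hx with hx | hx
  · have hadj : adjoint (F : K →L[𝕜] K) (V (J x)) = (a : 𝕜) ^ 2 • V x :=
      adjoint_apply_isometry_eq_of_norm_compression_eq (B := (J : H →L[𝕜] H)) hV hJ hF hx
    rw [hadj]
    exact Submodule.smul_mem _ _ ⟨x, rfl⟩
  · have hadj_symm : adjoint (F.symm : K →L[𝕜] K) (V (J.symm (J x))) = (c : 𝕜) ^ 2 • V (J x) :=
      adjoint_apply_isometry_eq_of_norm_compression_eq (B := (J.symm : H →L[𝕜] H))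
        hV hJinv hFinv (by simpa using hx)
    rw [J.symm_apply_apply] at hadj_symm
    have hadj_comp : adjoint (F : K →L[𝕜] K) ∘L adjoint (F.symm : K →L[𝕜] K) = .id 𝕜 K := by
      rw [← adjoint_comp, F.coe_symm_comp_coe, adjoint_id]
    have hsmul : (c : 𝕜) ^ 2 • adjoint (F : K →L[𝕜] K) (V (J x)) = V x := by
      rw [← map_smul, ← hadj_symm]
      exact DFunLike.congr_fun hadj_comp (V x)
    obtain rfl | hc := eq_or_ne c 0
    · have hx0 : x = 0 := by simpa using hx
      simp [hx0]
    · have hc2 : (c : 𝕜) ^ 2 ≠ 0 := pow_ne_zero 2 (RCLike.ofReal_ne_zero.2 hc)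
      exact (V.range.smul_mem_iff hc2).1 ⟨x, hsmul.symm⟩

theorem qa_script_dilation_extremal_general (hV : ∀ x, ‖V x‖ = ‖x‖)
    (hJ : (J : H →L[𝕜] H) = adjoint V ∘L (F : K →L[𝕜] K) ∘L V)
    (hJinv : (J.symm : H →L[𝕜] H) = adjoint V ∘L (F.symm : K →L[𝕜] K) ∘L V)
    (hF : ‖(F : K →L[𝕜] K)‖ ≤ a) (hFinv : ‖(F.symm : K →L[𝕜] K)‖ ≤ c)
    (hspan : Submodule.span 𝕜 (extremalVectors a c (J : H →L[𝕜] H)) = ⊤) :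
    (∀ y ∈ Set.range V, F y ∈ Set.range V) ∧
      (∀ y ∈ Set.range V, adjoint (F : K →L[𝕜] K) y ∈ Set.range V) := by
  have hFV : (F : K →L[𝕜] K) ∘L V = V ∘L (J : H →L[𝕜] H) :=
    coe_injective <| LinearMap.ext_on hspan fun _ hx ↦
      apply_isometry_eq_of_mem_extremalVectors hV hJ hJinv hF hFinv hx
  have hadj (x : H) : adjoint (F : K →L[𝕜] K) (V (J x)) ∈ V.range := by
    have hle : Submodule.span 𝕜 (extremalVectors a c (J : H →L[𝕜] H)) ≤
        V.range.comap (adjoint (F : K →L[𝕜] K) ∘L V ∘L (J : H →L[𝕜] H)).toLinearMap :=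
      Submodule.span_le.2 fun _ hx ↦
        adjoint_apply_isometry_mem_range_of_mem_extremalVectors hV hJ hJinv hF hFinv hx
    exact hle (hspan ▸ Submodule.mem_top)
  refine ⟨?_, ?_⟩
  · rintro _ ⟨x, rfl⟩
    exact ⟨J x, (DFunLike.congr_fun hFV x).symm⟩
  · rintro _ ⟨x, rfl⟩
    simpa using hadj (J.symm x)

end Dilation

end Isometry

lemma memQAscript.span_extremalVectors_eq_top {H : Type*} [NormedAddCommGroup H]
    [InnerProductSpace ℂ H] [CompleteSpace H] {r : ℝ} (hr : 0 < r) {J : H →L[ℂ] H}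
    (hJ : memQAscript r J) : Submodule.span ℂ (extremalVectors r⁻¹ r⁻¹ J) = ⊤ := by
  obtain ⟨-, Pp, Pm, ⟨-, hPp⟩, ⟨-, hPm⟩, hsum, hJJ⟩ := hJ
  have hJPp (x : H) : ‖J (Pp x)‖ = r * ‖Pp x‖ := by
    refine norm_apply_eq_of_adjoint_apply_apply_eq_smul hr.le ?_
    exact DFunLike.congr_fun (hJJ ▸ smul_add_smul_mul_eq_smul hPp hsum _ _ :
      adjoint J * J * Pp = (r : ℂ) ^ 2 • Pp) x
  have hJPm (x : H) : ‖J (Pm x)‖ = r⁻¹ * ‖Pm x‖ := by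
    refine norm_apply_eq_of_adjoint_apply_apply_eq_smul (inv_nonneg.2 hr.le) ?_
    rw [add_comm] at hsum hJJ
    rw [RCLike.ofReal_inv]
    exact DFunLike.congr_fun (hJJ ▸ smul_add_smul_mul_eq_smul hPm hsum _ _ :
      adjoint J * J * Pm = (r : ℂ)⁻¹ ^ 2 • Pm) x
  refine Submodule.eq_top_iff'.2 fun x ↦ ?_
  rw [show x = Pp x + Pm x from (DFunLike.congr_fun hsum x).symm]
  refine add_mem (Submodule.subset_span (Or.inr ?_)) (Submodule.subset_span (Or.inl (hJPm x)))
  rw [hJPp, inv_mul_cancel_left₀ hr.ne']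

/-- Every element of `𝒬𝔸_r` is dilation extremal in the quantum annulus `ℚ𝔸_r`:
any `ℂ[x,x⁻¹]`-dilation of `J ∈ 𝒬𝔸_r` to an element `F` of `ℚ𝔸_r` is trivial, i.e. the
range of the isometry `V` reduces `F`. -/
theorem qa_script_dilation_extremal {H K : Type*}
    [NormedAddCommGroup H] [InnerProductSpace ℂ H] [CompleteSpace H]
    [NormedAddCommGroup K] [InnerProductSpace ℂ K] [CompleteSpace K]
    (r : ℝ) (hr0 : 0 < r) (hr1 : r < 1)
    (J J' : H →L[ℂ] H) (hJinv : J * J' = 1) (hJinv' : J' * J = 1)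
    (hJ : memQAscript r J)
    (F F' : K →L[ℂ] K) (hFinv : F * F' = 1) (hFinv' : F' * F = 1)
    (hFnorm : ‖F‖ ≤ r⁻¹) (hF'norm : ‖F'‖ ≤ r⁻¹)
    (V : H →L[ℂ] K) (hV : ∀ x, ‖V x‖ = ‖x‖)
    (hdil : ∀ n : ℕ, J ^ n = adjoint V ∘L (F ^ n) ∘L V ∧
      J' ^ n = adjoint V ∘L (F' ^ n) ∘L V) :
    (∀ y ∈ Set.range V, F y ∈ Set.range V) ∧
      (∀ y ∈ Set.range V, adjoint F y ∈ Set.range V) := by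
  have hdil_one := hdil 1
  simp only [pow_one] at hdil_one
  exact qa_script_dilation_extremal_general (J := .ofUnit ⟨J, J', hJinv, hJinv'⟩)
    (F := .ofUnit ⟨F, F', hFinv, hFinv'⟩) hV hdil_one.1 hdil_one.2 hFnorm hF'norm
    (hJ.span_extremalVectors_eq_top hr0)

end
end

section
/- Fix 0 < r < 1. If H is a complex Hilbert space and T is an invertible bounded linear operator on H with ‖T‖ ≤ r⁻¹ and ‖T⁻¹‖ ≤ r⁻¹, then there exist a complex Hilbert space K, an operator J ∈ 𝒬𝔸_r[K], and a linear isometry V : H → K such that Tⁿ = V* Jⁿ V for every integer n. -/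
open ContinuousLinearMap

noncomputable section

universe u

/-!
Put `c = r² + r⁻²`. For a positive invertible `a` with `a, a⁻¹ ≤ r⁻²` the product of the commuting
positive elements `r⁻² - a` and `r⁻² - a⁻¹` is positive, that is, `a + a⁻¹ ≤ c`. Applied to
`a = TT*`, this gives an operator `F = (c - TT* - (TT*)⁻¹)^{1/2}` that commutes with `TT*`. The
dilation is `J = [T, F; 0, T⁻¹]` on `H ⊕ H`. It and its inverse are upper triangular, so the
corner of `Jⁿ` is `Tⁿ` for every integer `n`. The operator `G = T⁻¹FT` is self-adjoint and satisfies
`G² = c - T*T - (T*T)⁻¹`, which yields `J*J + (J*J)⁻¹ = c`. Hence `(J*J - r⁻²)(J*J - r²) = 0`, and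
`J*J` splits along two complementary projections with eigenvalues `r²` and `r⁻²`.
-/

section SelfAdjointDecomposition

variable {𝕜 A : Type*} [Field 𝕜] [StarRing 𝕜] [Ring A] [StarRing A] [Algebra 𝕜 A]
  [StarModule 𝕜 A] {a : A} {α β : 𝕜}

theorem exists_isStarProjection_of_sub_mul_sub_eq_zero (ha : IsSelfAdjoint a)
    (hα : IsSelfAdjoint α) (hβ : IsSelfAdjoint β) (hαβ : α ≠ β)
    (h : (a - algebraMap 𝕜 A β) * (a - algebraMap 𝕜 A α) = 0) :
    ∃ p : A, IsStarProjection p ∧ a = α • p + β • (1 - p) := by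
  have hsub : α - β ≠ 0 := sub_ne_zero.mpr hαβ
  obtain ⟨b, hb⟩ : ∃ b, b = a - algebraMap 𝕜 A β := ⟨_, rfl⟩
  rw [← hb] at h
  have hb_sq : b * b = (α - β) • b := by
    calc b * b = b * (a - algebraMap 𝕜 A α) + b * algebraMap 𝕜 A (α - β) := by
          rw [← mul_add, map_sub, sub_add_sub_cancel, hb]
      _ = (α - β) • b := by rw [h, zero_add, ← Algebra.commutes, Algebra.smul_def]
  have hb_star : IsSelfAdjoint b := hb ▸ ha.sub (hβ.algebraMap A)
  refine ⟨(α - β)⁻¹ • b, ⟨?_, (hα.sub hβ).inv₀.smul hb_star⟩, ?_⟩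
  · rw [IsIdempotentElem, smul_mul_smul_comm, hb_sq, smul_smul, mul_assoc,
      inv_mul_cancel₀ hsub, mul_one]
  · calc a = (α - β) • (α - β)⁻¹ • b + β • 1 := by
          rw [smul_inv_smul₀ hsub, hb, Algebra.algebraMap_eq_smul_one, sub_add_cancel]
      _ = α • (α - β)⁻¹ • b + β • (1 - (α - β)⁻¹ • b) := by
          rw [sub_smul, smul_sub β, sub_add_eq_add_sub, add_sub_assoc]

theorem exists_isStarProjection_of_add_inv_eq {u : Aˣ} (hu : IsSelfAdjoint (u : A))
    (hα : IsSelfAdjoint α) (hα₀ : α ≠ 0) (hα_inv : α ≠ α⁻¹)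
    (h : (u : A) + ↑u⁻¹ = algebraMap 𝕜 A (α + α⁻¹)) :
    ∃ p : A, IsStarProjection p ∧ (u : A) = α • p + α⁻¹ • (1 - p) := by
  refine exists_isStarProjection_of_sub_mul_sub_eq_zero hu hα hα.inv₀ hα_inv ?_
  calc ((u : A) - algebraMap 𝕜 A α⁻¹) * (u - algebraMap 𝕜 A α)
      = u * u - u * algebraMap 𝕜 A (α + α⁻¹) + algebraMap 𝕜 A (α⁻¹ * α) := by
        rw [sub_mul, mul_sub, mul_sub, Algebra.commutes α⁻¹, ← map_mul, map_add, mul_add]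
        abel
    _ = 0 := by
        rw [← h, mul_add, Units.mul_inv, inv_mul_cancel₀ hα₀, map_one]
        abel

end SelfAdjointDecomposition

section CStarAlgebra

variable {A : Type*} [CStarAlgebra A] {s : ℝ}

theorem add_inv_le_algebraMap [PartialOrder A] [StarOrderedRing A] (hs : 0 < s) {a : Aˣ}
    (ha : (a : A) ≤ algebraMap ℝ A s) (ha_inv : (↑a⁻¹ : A) ≤ algebraMap ℝ A s) :
    (a : A) + ↑a⁻¹ ≤ algebraMap ℝ A (s + s⁻¹) := by
  have hcomm : Commute (algebraMap ℝ A s - a) (algebraMap ℝ A s - ↑a⁻¹) :=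
    (Algebra.commute_algebraMap_left s _).sub_left
      ((Algebra.commute_algebraMap_right s _).sub_right (Commute.refl _).units_inv_right)
  have hprod : s⁻¹ • ((algebraMap ℝ A s - a) * (algebraMap ℝ A s - ↑a⁻¹)) =
      algebraMap ℝ A (s + s⁻¹) - (a + ↑a⁻¹) := by
    simp only [sub_mul, mul_sub, Units.mul_inv, Algebra.algebraMap_eq_smul_one, smul_mul_assoc,
      mul_smul_comm, one_mul, mul_one]
    match_scalars <;> field_simp
    ring
  rw [← sub_nonneg, ← hprod]
  exact smul_nonneg (inv_nonneg.mpr hs.le)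
    (hcomm.mul_nonneg (sub_nonneg.mpr ha) (sub_nonneg.mpr ha_inv))

theorem exists_isSelfAdjoint_commute_mul_self_eq_sub_add_inv (hs : 0 < s) {u : Aˣ}
    (hu : ‖(u : A)‖ ^ 2 ≤ s) (hu_inv : ‖(↑u⁻¹ : A)‖ ^ 2 ≤ s) :
    ∃ f : A, IsSelfAdjoint f ∧ Commute f ↑(u * star u) ∧
      f * f = algebraMap ℝ A (s + s⁻¹) - (↑(u * star u) + ↑(u * star u)⁻¹) := by
  let _ : PartialOrder A := CStarAlgebra.spectralOrder A
  have : StarOrderedRing A := CStarAlgebra.spectralOrderedRing A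
  have hle : ↑(u * star u) + ↑(u * star u)⁻¹ ≤ algebraMap ℝ A (s + s⁻¹) := by
    refine add_inv_le_algebraMap hs ?_ ?_
    · exact CStarAlgebra.mul_star_le_algebraMap_norm_sq.trans (algebraMap_mono A hu)
    · rw [mul_inv_rev]
      exact CStarAlgebra.star_mul_le_algebraMap_norm_sq.trans (algebraMap_mono A hu_inv)
  set d := algebraMap ℝ A (s + s⁻¹) - (↑(u * star u) + ↑(u * star u)⁻¹)
  have hcomm : Commute d ↑(u * star u) :=
    (Algebra.commute_algebraMap_left _ _).sub_left
      ((Commute.refl _).add_left (Commute.refl _).units_inv_left)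
  exact ⟨CFC.sqrt d, (CFC.sqrt_nonneg d).isSelfAdjoint, hcomm.cfcₙ_nnreal _,
    CFC.sqrt_mul_sqrt_self d (sub_nonneg.mpr hle)⟩

end CStarAlgebra

section TriangularMatrix

theorem pow_apply_self_of_isUpperTriangular {ι R : Type*} [Fintype ι] [LinearOrder ι] [Semiring R]
    {M : Matrix ι ι R} (hM : M.IsUpperTriangular) (n : ℕ) (i : ι) :
    (M ^ n) i i = M i i ^ n := by
  induction n with
  | zero => simp
  | succ n ih =>
    rw [pow_succ, Matrix.mul_apply, Finset.sum_eq_single_of_mem i (Finset.mem_univ i), ih, pow_succ]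
    intro j _ hj
    rcases lt_or_gt_of_ne hj with hlt | hgt
    · rw [hM.pow n hlt, zero_mul]
    · rw [hM hgt, mul_zero]

theorem isUpperTriangular_fin_two {R : Type*} [Zero R] (a b d : R) :
    !![a, b; 0, d].IsUpperTriangular := by
  intro i j hij
  fin_cases i <;> fin_cases j <;> simp_all

theorem star_matrix_fin_two {R : Type*} [Star R] (a b c d : R) :
    star !![a, b; c, d] = !![star a, star c; star b, star d] := by
  ext i j
  fin_cases i <;> fin_cases j <;> rfl

variable {R : Type*} [Ring R]

/-- The upper triangular operator matrix `[u, f; 0, u⁻¹]` as a unit, its inverse being explicit.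
For a suitable `f` it dilates the integer powers of `u` from the upper left corner. -/
def triangularUnit (u : Rˣ) (f : R) : (Matrix (Fin 2) (Fin 2) R)ˣ where
  val := !![↑u, f; 0, ↑u⁻¹]
  inv := !![↑u⁻¹, -(↑u⁻¹ * f * u); 0, ↑u]
  val_inv := by simp [Matrix.one_fin_two, mul_assoc]
  inv_val := by simp [Matrix.one_fin_two, mul_assoc]

theorem triangularUnit_pow_apply_zero_zero (u : Rˣ) (f : R) (n : ℕ) :
    ((triangularUnit u f : Matrix (Fin 2) (Fin 2) R) ^ n) 0 0 = (u : R) ^ n :=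
  pow_apply_self_of_isUpperTriangular (isUpperTriangular_fin_two _ _ _) n 0

theorem triangularUnit_inv_pow_apply_zero_zero (u : Rˣ) (f : R) (n : ℕ) :
    ((↑(triangularUnit u f)⁻¹ : Matrix (Fin 2) (Fin 2) R) ^ n) 0 0 = (↑u⁻¹ : R) ^ n :=
  pow_apply_self_of_isUpperTriangular (isUpperTriangular_fin_two _ _ _) n 0

variable [StarRing R] {u : Rˣ} {f : R}

theorem units_conj_mul_star_of_commute (hcomm : Commute f ↑(u * star u)) :
    ↑u⁻¹ * f * u * ↑(star u) = star u * f := by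
  calc ↑u⁻¹ * f * u * ↑(star u) = ↑u⁻¹ * (f * ↑(u * star u)) := by
        simp only [Units.val_mul, mul_assoc]
    _ = star u * f := by
        rw [hcomm.eq, Units.val_mul, mul_assoc, Units.inv_mul_cancel_left]

theorem isSelfAdjoint_units_conj_of_commute (hf : IsSelfAdjoint f)
    (hcomm : Commute f ↑(u * star u)) : IsSelfAdjoint (↑u⁻¹ * f * u) := by
  calc star (↑u⁻¹ * f * u) = star u * f * ↑(star u)⁻¹ := by
        simp only [star_mul, hf.star_eq, mul_assoc, Units.coe_star, Units.coe_star_inv]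
    _ = ↑u⁻¹ * f * u := by
        rw [← units_conj_mul_star_of_commute hcomm, Units.mul_inv_cancel_right]

variable {S : Type*} [CommSemiring S] [Algebra S R] {c : S}

theorem units_conj_mul_self_eq
    (hff : f * f = algebraMap S R c - (↑(u * star u) + ↑(u * star u)⁻¹)) :
    ↑u⁻¹ * f * u * (↑u⁻¹ * f * u) =
      algebraMap S R c - (↑(star u * u) + ↑(star u * u)⁻¹) := by
  calc ↑u⁻¹ * f * u * (↑u⁻¹ * f * u) = ↑u⁻¹ * (f * f) * u := by simp [mul_assoc]
    _ = algebraMap S R c - (↑(star u * u) + ↑(star u * u)⁻¹) := by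
      rw [hff]
      simp [mul_sub, sub_mul, mul_add, add_mul, ← Algebra.commutes, mul_assoc]

theorem star_triangularUnit_mul_self_add_inv (hf : IsSelfAdjoint f)
    (hcomm : Commute f ↑(u * star u))
    (hff : f * f = algebraMap S R c - (↑(u * star u) + ↑(u * star u)⁻¹)) :
    ↑(star (triangularUnit u f) * triangularUnit u f) +
      ↑(star (triangularUnit u f) * triangularUnit u f)⁻¹ =
      algebraMap S (Matrix (Fin 2) (Fin 2) R) c := by
  obtain ⟨g, hg⟩ : ∃ g, g = ↑u⁻¹ * f * u := ⟨_, rfl⟩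
  have hg_star : star g = g := by
    rw [hg, (isSelfAdjoint_units_conj_of_commute hf hcomm).star_eq]
  have hgg : g * g = algebraMap S R c - (↑(star u * u) + ↑(star u * u)⁻¹) := by
    rw [hg, units_conj_mul_self_eq hff]
  have hgu : g * star (u : R) = star (u : R) * f := by
    rw [hg, ← Units.coe_star, units_conj_mul_star_of_commute hcomm]
  have hug : u * g = f * u := by rw [hg, mul_assoc, Units.mul_inv_cancel_left]
  have hval : (triangularUnit u f : Matrix (Fin 2) (Fin 2) R) = !![↑u, f; 0, ↑u⁻¹] := rfl
  have hinv : (↑(triangularUnit u f)⁻¹ : Matrix (Fin 2) (Fin 2) R) = !![↑u⁻¹, -g; 0, ↑u] := by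
    rw [hg]
    rfl
  have hmul : ↑(star (triangularUnit u f) * triangularUnit u f) =
      !![↑(star u * u), star ↑u * f; f * u, f * f + ↑(u * star u)⁻¹] := by
    rw [Units.val_mul, Units.coe_star, hval, star_matrix_fin_two, Matrix.mul_fin_two]
    simp [hf.star_eq]
  have hmul_inv : (↑(star (triangularUnit u f) * triangularUnit u f)⁻¹ : Matrix _ _ R) =
      !![↑(star u * u)⁻¹ + g * g, -(g * star ↑u); -(u * g), ↑(u * star u)] := by
    rw [mul_inv_rev, ← star_inv, Units.val_mul, Units.coe_star, hinv, star_matrix_fin_two,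
      Matrix.mul_fin_two]
    simp [hg_star]
  have htop : ↑(star u * u) + (↑(star u * u)⁻¹ + g * g) = algebraMap S R c := by
    rw [hgg, ← add_assoc, add_sub_cancel]
  have hbot : f * f + ↑(u * star u)⁻¹ + ↑(u * star u) = algebraMap S R c := by
    rw [hff, add_assoc, add_comm (↑(u * star u)⁻¹ : R), sub_add_cancel]
  rw [hmul, hmul_inv, hgu, hug, Matrix.of_add_of, Matrix.algebraMap_eq_diagonal,
    Matrix.diagonal_fin_two]
  simpa using And.intro htop hbot

end TriangularMatrix

section BlockOperator

open scoped ENNReal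

/-- The inclusion of the `i`-th summand of a finite `ℓᵖ` direct sum, as a linear isometry. -/
def coordinateIsometry (p : ℝ≥0∞) [Fact (1 ≤ p)] (𝕜 : Type*) {ι : Type*} [Semiring 𝕜] [Fintype ι]
    [DecidableEq ι] (E : ι → Type*) [∀ i, SeminormedAddCommGroup (E i)] [∀ i, Module 𝕜 (E i)]
    (i : ι) : E i →ₗᵢ[𝕜] PiLp p E where
  toFun x := PiLp.single p i x
  map_add' _ _ := PiLp.single_add p i
  map_smul' c x := PiLp.ext fun j => congrFun (Pi.single_smul i c x) j
  norm_map' := PiLp.norm_single p E i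

/-- The operator on the finite `ℓᵖ` direct sum of copies of `E` with operator matrix `M`. -/
def blockCLM (p : ℝ≥0∞) {𝕜 ι E : Type*} [NormedField 𝕜] [SeminormedAddCommGroup E]
    [NormedSpace 𝕜 E] [Fintype ι] (M : Matrix ι ι (E →L[𝕜] E)) :
    PiLp p (fun _ : ι => E) →L[𝕜] PiLp p (fun _ : ι => E) where
  toFun x := WithLp.toLp p fun i => ∑ j, M i j (x j)
  map_add' x y := by
    ext i
    simp [Finset.sum_add_distrib]
  map_smul' c x := by
    ext i
    simp [Finset.smul_sum]
  cont := by fun_prop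

theorem blockCLM_apply (p : ℝ≥0∞) {𝕜 ι E : Type*} [NormedField 𝕜] [SeminormedAddCommGroup E]
    [NormedSpace 𝕜 E] [Fintype ι] (M : Matrix ι ι (E →L[𝕜] E)) (x : PiLp p fun _ : ι => E) (i : ι) :
    blockCLM p M x i = ∑ j, M i j (x j) :=
  rfl

variable {𝕜 ι H : Type*} [RCLike 𝕜] [NormedAddCommGroup H] [InnerProductSpace 𝕜 H]
  [CompleteSpace H] [Fintype ι] [DecidableEq ι]

variable (𝕜 ι H) in
/-- The star homomorphism by which operator matrices act on the Hilbert direct sum of copies of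
`H`; this direct sum is encoded as `PiLp 2`. -/
def blockOperator : Matrix ι ι (H →L[𝕜] H) →⋆ₐ[𝕜]
    (PiLp 2 (fun _ : ι => H) →L[𝕜] PiLp 2 (fun _ : ι => H)) where
  toFun := blockCLM 2
  map_one' := by
    ext x i
    simp [blockCLM_apply, Matrix.one_apply, apply_ite, ite_apply]
  map_mul' M N := by
    ext x i
    simp only [blockCLM_apply, Matrix.mul_apply, mul_apply_eq_comp, map_sum, sum_apply]
    exact Finset.sum_comm
  map_zero' := by
    ext x i
    simp [blockCLM_apply]
  map_add' M N := by
    ext x i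
    simp [blockCLM_apply, Finset.sum_add_distrib]
  commutes' c := by
    ext x i
    simp [blockCLM_apply, Algebra.algebraMap_eq_smul_one, Matrix.one_apply, apply_ite, ite_apply]
  map_star' M := by
    refine (eq_adjoint_iff _ _).mpr fun x y => ?_
    simp only [PiLp.inner_apply, blockCLM_apply, Matrix.star_apply, star_eq_adjoint, sum_inner,
      inner_sum, adjoint_inner_left]
    exact Finset.sum_comm

theorem adjoint_coordinateIsometry_comp_blockOperator_comp (M : Matrix ι ι (H →L[𝕜] H)) (i j : ι) :
    adjoint (coordinateIsometry 2 𝕜 (fun _ => H) i).toContinuousLinearMap ∘L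
      blockOperator 𝕜 ι H M ∘L
      (coordinateIsometry 2 𝕜 (fun _ => H) j).toContinuousLinearMap = M i j := by
  have hblock (x : H) (k : ι) :
      blockOperator 𝕜 ι H M (coordinateIsometry 2 𝕜 (fun _ => H) j x) k = M k j x := by
    refine (blockCLM_apply 2 M _ k).trans ?_
    simp [coordinateIsometry, apply_ite]
  refine ContinuousLinearMap.ext fun x => ext_inner_right 𝕜 fun y => ?_
  simp only [comp_apply, LinearIsometry.coe_toContinuousLinearMap, adjoint_inner_left,
    PiLp.inner_apply, hblock]
  simp [coordinateIsometry, apply_ite]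

end BlockOperator

section QuantumAnnulus

variable {r : ℝ} {H : Type*} [NormedAddCommGroup H] [InnerProductSpace ℂ H] [CompleteSpace H]

theorem memQAscript_of_add_inv_eq (hr0 : 0 < r) (hr1 : r < 1) {J : (H →L[ℂ] H)ˣ}
    (h : ↑(star J * J) + ↑(star J * J)⁻¹ = algebraMap ℝ (H →L[ℂ] H) (r ^ 2 + (r ^ 2)⁻¹)) :
    memQAscript r (J : H →L[ℂ] H) := by
  have hr_sq_pos : 0 < r ^ 2 := by positivity
  have hr_sq_lt : r ^ 2 < 1 := pow_lt_one₀ hr0.le hr1 two_ne_zero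
  obtain ⟨P, hP, hJP⟩ := exists_isStarProjection_of_add_inv_eq (u := star J * J) (.star_mul_self _)
    (.all (r ^ 2)) hr_sq_pos.ne' (hr_sq_lt.trans (one_lt_inv₀ hr_sq_pos |>.mpr hr_sq_lt)).ne h
  refine ⟨J.isUnit, P, 1 - P, ⟨hP.isSelfAdjoint, hP.isIdempotentElem⟩,
    ⟨hP.one_sub.isSelfAdjoint, hP.one_sub.isIdempotentElem⟩, add_sub_cancel _ _, ?_⟩
  calc adjoint (J : H →L[ℂ] H) * J = r ^ 2 • P + (r ^ 2)⁻¹ • (1 - P) := hJP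
    _ = (r : ℂ) ^ 2 • P + (r : ℂ)⁻¹ ^ 2 • (1 - P) := by
      simp only [← Complex.coe_smul, Complex.ofReal_pow, Complex.ofReal_inv, inv_pow]

theorem memQAscript_starAlgHom_apply {A : Type*} [Ring A] [StarRing A] [Algebra ℝ A]
    (φ : A →⋆ₐ[ℝ] (H →L[ℂ] H)) (hr0 : 0 < r) (hr1 : r < 1) {a : Aˣ}
    (h : ↑(star a * a) + ↑(star a * a)⁻¹ = algebraMap ℝ A (r ^ 2 + (r ^ 2)⁻¹)) :
    memQAscript r (φ a) := by
  let Φ : Aˣ →* (H →L[ℂ] H)ˣ := Units.map (MonoidHomClass.toMonoidHom φ)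
  have hΦ : star (Φ a) * Φ a = Φ (star a * a) := by
    ext1
    simp [Φ, map_star]
  refine memQAscript_of_add_inv_eq (J := Φ a) hr0 hr1 ?_
  calc ↑(star (Φ a) * Φ a) + ↑(star (Φ a) * Φ a)⁻¹
      = φ (↑(star a * a) + ↑(star a * a)⁻¹) := by
        rw [hΦ, map_add]
        rfl
    _ = algebraMap ℝ (H →L[ℂ] H) (r ^ 2 + (r ^ 2)⁻¹) := by
      rw [h, AlgHomClass.commutes]

end QuantumAnnulus

/-- Every element of the quantum annulus `ℚ𝔸_r` has a `ℂ[x,x⁻¹]`-dilation to an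
element of `𝒬𝔸_r`. -/
theorem qa_dilation {H : Type u}
    [NormedAddCommGroup H] [InnerProductSpace ℂ H] [CompleteSpace H]
    (r : ℝ) (hr0 : 0 < r) (hr1 : r < 1)
    (T T' : H →L[ℂ] H) (hTinv : T * T' = 1) (hTinv' : T' * T = 1)
    (hTnorm : ‖T‖ ≤ r⁻¹) (hT'norm : ‖T'‖ ≤ r⁻¹) :
    ∃ (K : Type u) (_ : NormedAddCommGroup K) (_ : InnerProductSpace ℂ K)
      (_ : CompleteSpace K) (J J' : K →L[ℂ] K) (V : H →L[ℂ] K),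
      J * J' = 1 ∧ J' * J = 1 ∧ memQAscript r J ∧ (∀ x, ‖V x‖ = ‖x‖) ∧
      ∀ n : ℕ, T ^ n = adjoint V ∘L (J ^ n) ∘L V ∧
        T' ^ n = adjoint V ∘L (J' ^ n) ∘L V := by
  let u : (H →L[ℂ] H)ˣ := ⟨T, T', hTinv, hTinv'⟩
  have norm_sq_le {S : H →L[ℂ] H} (hS : ‖S‖ ≤ r⁻¹) : ‖S‖ ^ 2 ≤ (r ^ 2)⁻¹ := by
    rw [← inv_pow]
    gcongr
  obtain ⟨f, hf, hcomm, hff⟩ := exists_isSelfAdjoint_commute_mul_self_eq_sub_add_inv (u := u)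
    (by positivity) (norm_sq_le hTnorm) (norm_sq_le hT'norm)
  rw [inv_inv, add_comm _ (r ^ 2)] at hff
  let φ := blockOperator ℂ (Fin 2) H
  let J := Units.map (MonoidHomClass.toMonoidHom φ) (triangularUnit u f)
  let V := coordinateIsometry 2 ℂ (fun _ : Fin 2 => H) 0
  have compress (M : Matrix (Fin 2) (Fin 2) (H →L[ℂ] H)) (n : ℕ) :
      (M ^ n) 0 0 = adjoint V.toContinuousLinearMap ∘L (φ M ^ n) ∘L V.toContinuousLinearMap := by
    rw [← map_pow, adjoint_coordinateIsometry_comp_blockOperator_comp]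
  exact ⟨PiLp 2 fun _ : Fin 2 => H, inferInstance, inferInstance, inferInstance, J, ↑J⁻¹,
    V.toContinuousLinearMap, J.mul_inv, J.inv_mul,
    memQAscript_starAlgHom_apply (φ.restrictScalars ℝ) hr0 hr1
      (star_triangularUnit_mul_self_add_inv hf hcomm hff),
    V.norm_map, fun n =>
      ⟨(triangularUnit_pow_apply_zero_zero u f n).symm.trans (compress _ n),
        (triangularUnit_inv_pow_apply_zero_zero u f n).symm.trans (compress _ n)⟩⟩

end
end

section
/- Fix 0 < r < 1 and let H be a complex Hilbert space. An invertible bounded linear operator T on H satisfies ‖T‖ ≤ r⁻¹ and ‖T⁻¹‖ ≤ r⁻¹ if and only if the self-adjoint operator (r⁻² + r²)I − T*T − T⁻¹T⁻* is positive semidefinite, where T⁻* denotes (T⁻¹)*. -/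
open ContinuousLinearMap

noncomputable section

/-!
For a positive invertible `a` and `s ≥ 1`, the continuous functional calculus turns
`a + a⁻¹ ≤ s + s⁻¹` into the inequality `x + x⁻¹ ≤ s + s⁻¹` at every spectral value `x > 0`, which
says exactly that both `x` and `x⁻¹` are at most `s` because
`s + s⁻¹ - x - x⁻¹ = s⁻¹ (s - x) (s - x⁻¹)`. Hence it is equivalent to `‖a‖ ≤ s` and `‖a⁻¹‖ ≤ s`.
Taking `a = T*T`, so that `a⁻¹ = T⁻¹T⁻*`, and `s = r⁻²` gives the theorem by the C⋆-identity.
-/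

theorem add_inv_le_add_inv_iff {K : Type*} [Field K] [LinearOrder K] [IsStrictOrderedRing K]
    {s x : K} (hs : 1 ≤ s) (hx : 0 < x) : x + x⁻¹ ≤ s + s⁻¹ ↔ x ≤ s ∧ x⁻¹ ≤ s := by
  have hs₀ : 0 < s := one_pos.trans_le hs
  have factor : s + s⁻¹ - (x + x⁻¹) = s⁻¹ * ((s - x) * (s - x⁻¹)) := by
    field_simp
    ring
  have inv_le_of_le {y : K} (h : s ≤ y) : y⁻¹ ≤ s :=
    (inv_le_one_of_one_le₀ (hs.trans h)).trans hs
  rw [← sub_nonneg, factor, mul_nonneg_iff_of_pos_left (inv_pos.2 hs₀), mul_nonneg_iff]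
  constructor
  · rintro (⟨hx_le, hinv_le⟩ | ⟨hle_x, hle_inv⟩)
    · exact ⟨sub_nonneg.1 hx_le, sub_nonneg.1 hinv_le⟩
    · exact ⟨inv_inv x ▸ inv_le_of_le (sub_nonpos.1 hle_inv), inv_le_of_le (sub_nonpos.1 hle_x)⟩
  · rintro ⟨hx_le, hinv_le⟩
    exact .inl ⟨sub_nonneg.2 hx_le, sub_nonneg.2 hinv_le⟩

theorem continuousOn_inv_spectrum_unit (K : Type*) {A : Type*} [Field K] [TopologicalSpace K]
    [ContinuousInv₀ K] [Ring A] [Algebra K A] (a : Aˣ) :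
    ContinuousOn (·⁻¹) (spectrum K (a : A)) :=
  continuousOn_inv₀.mono fun _ ↦ spectrum.ne_zero_of_mem_of_unit

section ContinuousFunctionalCalculus

variable {A : Type*} [TopologicalSpace A] [Ring A] [StarRing A] [PartialOrder A] [StarOrderedRing A]
  [Algebra ℝ A] [ContinuousFunctionalCalculus ℝ A IsSelfAdjoint] [NonnegSpectrumClass ℝ A]

theorem unit_inv_le_algebraMap_iff {a : Aˣ} (ha : IsSelfAdjoint (a : A)) {t : ℝ} :
    (↑a⁻¹ : A) ≤ algebraMap ℝ A t ↔ ∀ x ∈ spectrum ℝ (a : A), x⁻¹ ≤ t := by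
  rw [← cfc_inv_id (R := ℝ) a, cfc_le_algebraMap_iff _ _ _ (continuousOn_inv_spectrum_unit ℝ a)]

theorem unit_add_inv_le_algebraMap_iff {a : Aˣ} (ha : IsSelfAdjoint (a : A)) {t : ℝ} :
    (a + ↑a⁻¹ : A) ≤ algebraMap ℝ A t ↔ ∀ x ∈ spectrum ℝ (a : A), x + x⁻¹ ≤ t := by
  have continuousOn_inv := continuousOn_inv_spectrum_unit ℝ a
  have cfc_eq : cfc (fun x : ℝ ↦ x + x⁻¹) (a : A) = a + ↑a⁻¹ := by
    rw [cfc_add (a := (a : A)) _ _ (continuousOn_id' _) continuousOn_inv,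
      cfc_id' ℝ (a : A), cfc_inv_id a]
  exact cfc_eq ▸ cfc_le_algebraMap_iff (fun x ↦ x + x⁻¹) t (a : A)
    (continuousOn_id.add continuousOn_inv)

theorem unit_add_inv_le_algebraMap_add_inv_iff {a : Aˣ} (ha : 0 ≤ (a : A)) {s : ℝ} (hs : 1 ≤ s) :
    (a + ↑a⁻¹ : A) ≤ algebraMap ℝ A (s + s⁻¹) ↔
      (a : A) ≤ algebraMap ℝ A s ∧ (↑a⁻¹ : A) ≤ algebraMap ℝ A s := by
  have ha_sa : IsSelfAdjoint (a : A) := .of_nonneg ha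
  have spectrum_pos : ∀ x ∈ spectrum ℝ (a : A), 0 < x := fun x hx ↦
    (spectrum_nonneg_of_nonneg ha hx).lt_of_ne' (spectrum.ne_zero_of_mem_of_unit hx)
  rw [unit_add_inv_le_algebraMap_iff ha_sa, le_algebraMap_iff_spectrum_le ha_sa,
    unit_inv_le_algebraMap_iff ha_sa, ← forall₂_and]
  exact forall₂_congr fun x hx ↦ add_inv_le_add_inv_iff hs (spectrum_pos x hx)

end ContinuousFunctionalCalculus

theorem norm_star_mul_self_le_sq_iff {A : Type*} [NonUnitalNormedRing A] [StarRing A] [CStarRing A]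
    {a : A} {t : ℝ} (ht : 0 ≤ t) : ‖star a * a‖ ≤ t ^ 2 ↔ ‖a‖ ≤ t := by
  rw [CStarRing.norm_star_mul_self, ← sq, sq_le_sq₀ (norm_nonneg a) ht]

section CStarAlgebra

variable {A : Type*} [CStarAlgebra A] [PartialOrder A] [StarOrderedRing A]

theorem unit_add_inv_le_algebraMap_iff_norm_le {a : Aˣ} (ha : 0 ≤ (a : A)) {s : ℝ} (hs : 1 ≤ s) :
    (a + ↑a⁻¹ : A) ≤ algebraMap ℝ A (s + s⁻¹) ↔ ‖(a : A)‖ ≤ s ∧ ‖(↑a⁻¹ : A)‖ ≤ s := by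
  have hs₀ : 0 ≤ s := zero_le_one.trans hs
  have ha_inv : 0 ≤ (↑a⁻¹ : A) := CFC.inv_nonneg_of_nonneg a ha
  rw [unit_add_inv_le_algebraMap_add_inv_iff ha hs,
    CStarAlgebra.norm_le_iff_le_algebraMap _ hs₀ ha,
    CStarAlgebra.norm_le_iff_le_algebraMap _ hs₀ ha_inv]

theorem qa_membership_positivity_general (u : Aˣ) {r : ℝ} (hr0 : 0 < r) (hr1 : r ≤ 1) :
    (‖(u : A)‖ ≤ r⁻¹ ∧ ‖(↑u⁻¹ : A)‖ ≤ r⁻¹) ↔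
      0 ≤ (r⁻¹ ^ 2 + r ^ 2) • (1 : A) - star (u : A) * u - ↑u⁻¹ * star (↑u⁻¹ : A) := by
  have hr_inv : 0 ≤ r⁻¹ := inv_nonneg.2 hr0.le
  have hs : 1 ≤ r⁻¹ ^ 2 := one_le_pow₀ ((one_le_inv₀ hr0).2 hr1)
  have norm_star_mul : ‖(↑(star u * u) : A)‖ ≤ r⁻¹ ^ 2 ↔ ‖(u : A)‖ ≤ r⁻¹ :=
    norm_star_mul_self_le_sq_iff hr_inv
  have norm_star_mul_inv : ‖(↑(star u * u)⁻¹ : A)‖ ≤ r⁻¹ ^ 2 ↔ ‖(↑u⁻¹ : A)‖ ≤ r⁻¹ := by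
    simpa using norm_star_mul_self_le_sq_iff (a := star (↑u⁻¹ : A)) hr_inv
  calc (‖(u : A)‖ ≤ r⁻¹ ∧ ‖(↑u⁻¹ : A)‖ ≤ r⁻¹)
      ↔ ‖(↑(star u * u) : A)‖ ≤ r⁻¹ ^ 2 ∧ ‖(↑(star u * u)⁻¹ : A)‖ ≤ r⁻¹ ^ 2 := by
        rw [norm_star_mul, norm_star_mul_inv]
    _ ↔ (↑(star u * u) + ↑(star u * u)⁻¹ : A) ≤ algebraMap ℝ A (r⁻¹ ^ 2 + (r⁻¹ ^ 2)⁻¹) :=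
        (unit_add_inv_le_algebraMap_iff_norm_le (star_mul_self_nonneg (u : A)) hs).symm
    _ ↔ 0 ≤ (r⁻¹ ^ 2 + r ^ 2) • (1 : A) - star (u : A) * u - ↑u⁻¹ * star (↑u⁻¹ : A) := by
        rw [sub_sub, sub_nonneg, Algebra.algebraMap_eq_smul_one]
        simp

end CStarAlgebra

/-- An invertible operator `T` satisfies `‖T‖ ≤ r⁻¹` and `‖T⁻¹‖ ≤ r⁻¹` (i.e. lies in the
quantum annulus `ℚ𝔸_r`) if and only if `(r⁻² + r²)I − T*T − T⁻¹T⁻*` is positive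
semidefinite. -/
theorem qa_membership_positivity {H : Type*}
    [NormedAddCommGroup H] [InnerProductSpace ℂ H] [CompleteSpace H]
    (r : ℝ) (hr0 : 0 < r) (hr1 : r < 1)
    (T T' : H →L[ℂ] H) (hTinv : T * T' = 1) (hTinv' : T' * T = 1) :
    (‖T‖ ≤ r⁻¹ ∧ ‖T'‖ ≤ r⁻¹) ↔
      (((r⁻¹ ^ 2 + r ^ 2 : ℝ) : ℂ) • (1 : H →L[ℂ] H)
        - adjoint T * T - T' * adjoint T').IsPositive := by
  rw [← nonneg_iff_isPositive, Complex.coe_smul]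
  exact qa_membership_positivity_general ⟨T, T', hTinv, hTinv'⟩ hr0 hr1.le

end
end

section
/- Fix 0 < r < 1. Let H be a complex Hilbert space, let P₊ and P₋ be orthogonal projections on H with P₊ + P₋ = I, let U be a unitary operator on H with P₋ U P₊ = 0, and set J = U (r P₊ + r⁻¹ P₋). Then J is invertible, (r⁻² + r²)I − J*J − J⁻*J⁻¹ = (r⁻² − r²)(P₊ − U P₊ U*), the operator P₊ − U P₊ U* is an orthogonal projection, and (r⁻² + r²)I − J*J − J⁻*J⁻¹ = −((r⁻² + r²)I − JJ* − J⁻¹J⁻*). -/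
open ContinuousLinearMap

noncomputable section

/-!
Write `J = U D` with `D = r P₊ + r⁻¹ P₋` self-adjoint and invertible. Since
`D² + D⁻² = (r⁻² + r²) I`, the two defects collapse to
`(r⁻² + r²) I - J*J - J⁻*J⁻¹ = D⁻² - U D⁻² U*` and
`(r⁻² + r²) I - JJ* - J⁻¹J⁻* = U D⁻² U* - D⁻²`. As `D⁻² = r² I + (r⁻² - r²) P₊`, the scalar part
cancels in `D⁻² - U D⁻² U*`. Triangularity says that `ran (U P₊ U*) ⊆ ran P₊`, which makes
`P₊ - U P₊ U*` a projection.
-/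

section BlockScalar

variable {𝕜 A : Type*}

/-- The block scalar element `a p + b (1 - p)`: for an idempotent `p` it acts as `a` on the range of
`p` and as `b` on the complementary range. The operator `r P₊ + r⁻¹ P₋` is
`blockScalar P₊ r r⁻¹`. -/
def blockScalar [SMul 𝕜 A] [Ring A] (p : A) (a b : 𝕜) : A :=
  a • p + b • (1 - p)

section CommRing

variable [CommRing 𝕜] [Ring A] [Algebra 𝕜 A] {p : A}

lemma blockScalar_self (p : A) (a : 𝕜) : blockScalar p a a = a • 1 := by
  rw [blockScalar, ← smul_add, add_sub_cancel]

lemma blockScalar_add (p : A) (a b c d : 𝕜) :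
    blockScalar p a b + blockScalar p c d = blockScalar p (a + c) (b + d) := by
  simp only [blockScalar]
  module

lemma blockScalar_mul (hp : IsIdempotentElem p) (a b c d : 𝕜) :
    blockScalar p a b * blockScalar p c d = blockScalar p (a * c) (b * d) := by
  simp only [blockScalar, add_mul, mul_add, smul_mul_smul_comm, hp.eq, hp.one_sub.eq,
    hp.mul_one_sub_self, hp.one_sub_mul_self, smul_zero, add_zero, zero_add]

lemma isSelfAdjoint_blockScalar [StarRing 𝕜] [StarRing A] [StarModule 𝕜 A] {a b : 𝕜}
    (hp : IsSelfAdjoint p) (ha : IsSelfAdjoint a) (hb : IsSelfAdjoint b) :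
    IsSelfAdjoint (blockScalar p a b) :=
  (ha.smul hp).add (hb.smul ((IsSelfAdjoint.one A).sub hp))

lemma blockScalar_sub_unitary_conj [StarRing A] (p : A) (u : unitary A) (a b : 𝕜) :
    blockScalar p a b - u * blockScalar p a b * star (u : A)
      = (a - b) • (p - u * p * star (u : A)) := by
  simp only [blockScalar, mul_add, add_mul, mul_sub, sub_mul, mul_smul_comm, smul_mul_assoc,
    mul_one, Unitary.mul_star_self_of_mem u.2]
  module

end CommRing

section Field

variable [Field 𝕜] [Ring A] [Algebra 𝕜 A] {p : A} {a b : 𝕜}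

lemma blockScalar_mul_blockScalar_inv (hp : IsIdempotentElem p) (ha : a ≠ 0) (hb : b ≠ 0) :
    blockScalar p a b * blockScalar p a⁻¹ b⁻¹ = 1 := by
  rw [blockScalar_mul hp, mul_inv_cancel₀ ha, mul_inv_cancel₀ hb, blockScalar_self, one_smul]

lemma isUnit_blockScalar (hp : IsIdempotentElem p) (ha : a ≠ 0) (hb : b ≠ 0) :
    IsUnit (blockScalar p a b) :=
  isUnit_iff_exists.mpr ⟨blockScalar p a⁻¹ b⁻¹, blockScalar_mul_blockScalar_inv hp ha hb, by
    simpa only [inv_inv] using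
      blockScalar_mul_blockScalar_inv hp (inv_ne_zero ha) (inv_ne_zero hb)⟩

lemma ringInverse_blockScalar (hp : IsIdempotentElem p) (ha : a ≠ 0) (hb : b ≠ 0) :
    Ring.inverse (blockScalar p a b) = blockScalar p a⁻¹ b⁻¹ := by
  rw [← mul_one (Ring.inverse _),
    Ring.inverse_mul_eq_iff_eq_mul _ _ _ (isUnit_blockScalar hp ha hb),
    blockScalar_mul_blockScalar_inv hp ha hb]

end Field

end BlockScalar

section UnitaryMul

variable {A : Type*} [Ring A] [StarRing A]

lemma ringInverse_unitary_mul (u : unitary A) (d : A) :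
    Ring.inverse (u * d) = Ring.inverse d * star (u : A) := by
  rw [Ring.inverse_mul (.inl Unitary.isUnit_coe)]
  exact congrArg (Ring.inverse d * ·) (Ring.inverse_unit (Unitary.toUnits u))

variable {c d : A}

lemma sub_star_mul_self_unitary_mul (u : unitary A) (hd : IsSelfAdjoint d)
    (hc : d * d + Ring.inverse d * Ring.inverse d = c) :
    c - star (u * d) * (u * d) - star (Ring.inverse (u * d)) * Ring.inverse (u * d)
      = Ring.inverse d * Ring.inverse d
        - u * (Ring.inverse d * Ring.inverse d) * star (u : A) := by
  have gram : star (u * d) * (u * d) = d * d := by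
    rw [star_mul, hd.star_eq, mul_assoc, ← mul_assoc (star _), Unitary.coe_star_mul_self, one_mul]
  have inverse_gram : star (Ring.inverse (u * d)) * Ring.inverse (u * d)
      = u * (Ring.inverse d * Ring.inverse d) * star (u : A) := by
    simp only [ringInverse_unitary_mul, star_mul, star_star, ← Ring.inverse_star, hd.star_eq,
      mul_assoc]
  rw [gram, inverse_gram, ← hc, add_sub_cancel_left]

lemma sub_mul_star_self_unitary_mul {u : unitary A} (hd : IsSelfAdjoint d) (huc : Commute (u : A) c)
    (hc : d * d + Ring.inverse d * Ring.inverse d = c) :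
    c - u * d * star (u * d) - Ring.inverse (u * d) * star (Ring.inverse (u * d))
      = u * (Ring.inverse d * Ring.inverse d) * star (u : A)
        - Ring.inverse d * Ring.inverse d := by
  have cogram : u * d * star (u * d) = u * (d * d) * star (u : A) := by
    simp only [star_mul, hd.star_eq, mul_assoc]
  have inverse_cogram : Ring.inverse (u * d) * star (Ring.inverse (u * d))
      = Ring.inverse d * Ring.inverse d := by
    rw [ringInverse_unitary_mul, star_mul, star_star, ← Ring.inverse_star, hd.star_eq, mul_assoc,
      ← mul_assoc (star _), Unitary.coe_star_mul_self, one_mul]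
  have conj_c : u * (d * d) * star (u : A)
      + u * (Ring.inverse d * Ring.inverse d) * star (u : A) = c := by
    rw [← add_mul, ← mul_add, hc, huc.eq, mul_assoc, Unitary.mul_star_self_of_mem u.2, mul_one]
  rw [cogram, inverse_cogram, sub_left_inj, sub_eq_iff_eq_add', conj_c]

lemma isStarProjection_sub_unitary_conj {p : A} (hp : IsStarProjection p) (u : unitary A)
    (htri : (1 - p) * u * p = 0) : IsStarProjection (p - u * p * star (u : A)) := by
  have p_mul_conj : p * (u * p * star (u : A)) = u * p * star (u : A) := by
    rw [sub_mul, sub_mul, one_mul, sub_eq_zero] at htri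
    rw [← mul_assoc, ← mul_assoc, ← htri]
  exact (hp.map (Unitary.conjStarAlgAut ℤ A u)).sub_of_mul_eq_right hp p_mul_conj

end UnitaryMul

lemma isOrthProj_iff_isStarProjection {H : Type*} [NormedAddCommGroup H] [InnerProductSpace ℂ H]
    [CompleteSpace H] {P : H →L[ℂ] H} : IsOrthProj P ↔ IsStarProjection P :=
  and_comm.trans (isStarProjection_iff P).symm

theorem pa_script_projection_identity_general {𝕜 A : Type*} [Field 𝕜] [StarRing 𝕜] [Ring A]
    [StarRing A] [Algebra 𝕜 A] [StarModule 𝕜 A] {r : 𝕜} (hr : IsSelfAdjoint r) (hr0 : r ≠ 0)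
    {p : A} (hp : IsStarProjection p) (u : unitary A) (htri : (1 - p) * u * p = 0)
    {J : A} (hJ : J = u * blockScalar p r r⁻¹) :
    IsUnit J ∧
    ((r⁻¹ ^ 2 + r ^ 2) • (1 : A) - star J * J - star (Ring.inverse J) * Ring.inverse J
      = (r⁻¹ ^ 2 - r ^ 2) • (p - u * p * star (u : A))) ∧
    IsStarProjection (p - u * p * star (u : A)) ∧
    ((r⁻¹ ^ 2 + r ^ 2) • (1 : A) - star J * J - star (Ring.inverse J) * Ring.inverse J
      = -((r⁻¹ ^ 2 + r ^ 2) • (1 : A) - J * star J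
          - Ring.inverse J * star (Ring.inverse J))) := by
  subst hJ
  have p_idem := hp.isIdempotentElem
  have selfAdjoint := isSelfAdjoint_blockScalar hp.isSelfAdjoint hr hr.inv₀
  have square : blockScalar p r r⁻¹ * blockScalar p r r⁻¹ = blockScalar p (r ^ 2) (r⁻¹ ^ 2) := by
    simp only [blockScalar_mul p_idem, pow_two]
  have inv_square : Ring.inverse (blockScalar p r r⁻¹) * Ring.inverse (blockScalar p r r⁻¹)
      = blockScalar p (r⁻¹ ^ 2) (r ^ 2) := by
    simp only [ringInverse_blockScalar p_idem hr0 (inv_ne_zero hr0), blockScalar_mul p_idem,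
      inv_inv, pow_two]
  have square_add_inv_square : blockScalar p r r⁻¹ * blockScalar p r r⁻¹
      + Ring.inverse (blockScalar p r r⁻¹) * Ring.inverse (blockScalar p r r⁻¹)
      = (r⁻¹ ^ 2 + r ^ 2) • (1 : A) := by
    rw [square, inv_square, blockScalar_add, add_comm (r ^ 2), blockScalar_self]
  rw [sub_star_mul_self_unitary_mul u selfAdjoint square_add_inv_square,
    sub_mul_star_self_unitary_mul selfAdjoint ((Commute.one_right _).smul_right _)
      square_add_inv_square, inv_square]
  exact ⟨Unitary.isUnit_coe.mul (isUnit_blockScalar p_idem hr0 (inv_ne_zero hr0)),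
    blockScalar_sub_unitary_conj p u _ _, isStarProjection_sub_unitary_conj hp u htri,
    (neg_sub _ _).symm⟩

/-- For `J = U (r P₊ + r⁻¹ P₋)` with `U` unitary, block upper triangular
(`P₋ U P₊ = 0`), and `P₊, P₋` complementary orthogonal projections:
`J` is invertible, `(r⁻² + r²)I − J*J − J⁻*J⁻¹ = (r⁻² − r²)(P₊ − U P₊ U*)`,
the operator `P₊ − U P₊ U*` is an orthogonal projection, and
`(r⁻² + r²)I − J*J − J⁻*J⁻¹ = −((r⁻² + r²)I − JJ* − J⁻¹J⁻*)`. -/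
theorem pa_script_projection_identity {H : Type*}
    [NormedAddCommGroup H] [InnerProductSpace ℂ H] [CompleteSpace H]
    (r : ℝ) (hr0 : 0 < r) (hr1 : r < 1)
    (Pp Pm U : H →L[ℂ] H)
    (hPp : IsOrthProj Pp) (hPm : IsOrthProj Pm) (hsum : Pp + Pm = 1)
    (hU : adjoint U * U = 1) (hU' : U * adjoint U = 1)
    (htri : Pm * U * Pp = 0)
    (J : H →L[ℂ] H) (hJ : J = U * ((r : ℂ) • Pp + (r : ℂ)⁻¹ • Pm)) :
    IsUnit J ∧
    (((r⁻¹ ^ 2 + r ^ 2 : ℝ) : ℂ) • (1 : H →L[ℂ] H) - adjoint J * J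
        - adjoint (Ring.inverse J) * Ring.inverse J
      = ((r⁻¹ ^ 2 - r ^ 2 : ℝ) : ℂ) • (Pp - U * Pp * adjoint U)) ∧
    IsOrthProj (Pp - U * Pp * adjoint U) ∧
    (((r⁻¹ ^ 2 + r ^ 2 : ℝ) : ℂ) • (1 : H →L[ℂ] H) - adjoint J * J
        - adjoint (Ring.inverse J) * Ring.inverse J
      = -(((r⁻¹ ^ 2 + r ^ 2 : ℝ) : ℂ) • (1 : H →L[ℂ] H) - J * adjoint J
          - Ring.inverse J * adjoint (Ring.inverse J))) := by
  obtain rfl : Pm = 1 - Pp := eq_sub_of_add_eq' hsum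
  simpa only [isOrthProj_iff_isStarProjection, star_eq_adjoint, Complex.ofReal_add,
    Complex.ofReal_sub, Complex.ofReal_pow, Complex.ofReal_inv] using
    pa_script_projection_identity_general (Complex.conj_ofReal r)
      (Complex.ofReal_ne_zero.mpr hr0.ne') (isOrthProj_iff_isStarProjection.mp hPp)
      ⟨U, hU, hU'⟩ htri hJ

end
end

section
/- Fix 0 < r < 1. Let H and K be complex Hilbert spaces, let T be an invertible bounded linear operator on H, let Y ∈ ℙ𝔸_r[K], and let V : H → K be a linear isometry such that T = V* Y V and T⁻¹ = V* Y⁻¹ V. Then T ∈ ℙ𝔸_r[H]; that is, ℙ𝔸_r is closed with respect to ℂ[x,x⁻¹]-dilations. -/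
open ContinuousLinearMap

noncomputable section

/-!
Since `V` and `V*` are contractions, `1 - V*V` and `1 - VV*` are positive. Conjugating the second by
`YV` gives the Kadison–Schwarz inequality `(V*YV)*(V*YV) ≤ V*(Y*Y)V` for compressions. Hence
conjugation by `V` carries a bound `∑ Yᵢ*Yᵢ ≤ c` to `∑ (V*YᵢV)*(V*YᵢV) ≤ c V*V ≤ c`.
-/

section Contraction

variable {𝕜 E F G H : Type*} [RCLike 𝕜]
  [NormedAddCommGroup E] [InnerProductSpace 𝕜 E] [CompleteSpace E]
  [NormedAddCommGroup F] [InnerProductSpace 𝕜 F] [CompleteSpace F]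
  [NormedAddCommGroup G] [InnerProductSpace 𝕜 G] [CompleteSpace G]
  [NormedAddCommGroup H] [InnerProductSpace 𝕜 H] [CompleteSpace H]

theorem isPositive_one_sub_adjoint_comp_self_of_norm_le_one {B : E →L[𝕜] F} (hB : ‖B‖ ≤ 1) :
    (1 - adjoint B ∘L B).IsPositive := by
  refine isPositive_def'.mpr
    ⟨.sub isPositive_one.isSelfAdjoint (isPositive_adjoint_comp_self B).isSelfAdjoint, fun x ↦ ?_⟩
  have norm_le : ‖B x‖ ≤ ‖x‖ := B.le_of_opNorm_le_of_le hB le_rfl |>.trans_eq (one_mul _)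
  calc (0 : ℝ) ≤ ‖x‖ ^ 2 - ‖B x‖ ^ 2 := sub_nonneg.mpr (by gcongr)
    _ = (1 - adjoint B ∘L B).reApplyInnerSelf x := by
      simp [reApplyInnerSelf_apply, inner_sub_left, adjoint_inner_left]

theorem isPositive_adjoint_comp_self_sub_of_norm_le_one {B : F →L[𝕜] G} (hB : ‖B‖ ≤ 1)
    (A : E →L[𝕜] F) :
    (adjoint A ∘L A - adjoint (B ∘L A) ∘L (B ∘L A)).IsPositive := by
  convert (isPositive_one_sub_adjoint_comp_self_of_norm_le_one hB).adjoint_conj A using 1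
  simp [sub_comp, comp_sub, adjoint_comp, comp_assoc, one_def]

theorem isPositive_conj_sub_sum_adjoint_comp_self {ι : Type*} [Fintype ι]
    {C : F →L[𝕜] F} {Y : ι → F →L[𝕜] G}
    (hC : (C - ∑ i, adjoint (Y i) ∘L Y i).IsPositive)
    {B : G →L[𝕜] H} (hB : ‖B‖ ≤ 1) (V : E →L[𝕜] F) :
    (adjoint V ∘L C ∘L V
      - ∑ i, adjoint (B ∘L Y i ∘L V) ∘L (B ∘L Y i ∘L V)).IsPositive := by
  have defect_pos := isPositive_sum Finset.univ fun i _ ↦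
    isPositive_adjoint_comp_self_sub_of_norm_le_one hB (Y i ∘L V)
  convert (hC.adjoint_conj V).add defect_pos using 1
  simp [sub_comp, comp_sub, finsetSum_comp, comp_finsetSum, adjoint_comp, comp_assoc]

theorem pick_annulus_closed_dilations_general {ι : Type*} [Fintype ι] {c : ℝ} (hc : 0 ≤ c)
    {V : E →L[𝕜] F} (hV : ‖V‖ ≤ 1) (Y : ι → F →L[𝕜] F)
    (hY : ((c : 𝕜) • (1 : F →L[𝕜] F) - ∑ i, adjoint (Y i) * Y i).IsPositive) :
    ((c : 𝕜) • (1 : E →L[𝕜] E) - ∑ i,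
      adjoint (adjoint V ∘L Y i ∘L V) * (adjoint V ∘L Y i ∘L V)).IsPositive := by
  have adjoint_norm_le : ‖adjoint V‖ ≤ 1 := (LinearIsometryEquiv.norm_map adjoint V).trans_le hV
  have compressed := isPositive_conj_sub_sum_adjoint_comp_self hY adjoint_norm_le V
  have scalar_defect := (isPositive_one_sub_adjoint_comp_self_of_norm_le_one hV).smul_of_nonneg
    (RCLike.ofReal_nonneg.mpr hc)
  convert scalar_defect.add compressed using 1
  simp [smul_sub, mul_def, one_def]

end Contraction

/-- The Pick annulus `ℙ𝔸_r` is closed with respect to `ℂ[x,x⁻¹]`-dilations: if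
`Y ∈ ℙ𝔸_r[K]` and `V : H → K` is an isometry with `T = V* Y V` and `T⁻¹ = V* Y⁻¹ V`,
then `T ∈ ℙ𝔸_r[H]`. -/
theorem pick_annulus_closed_dilations {H K : Type*}
    [NormedAddCommGroup H] [InnerProductSpace ℂ H] [CompleteSpace H]
    [NormedAddCommGroup K] [InnerProductSpace ℂ K] [CompleteSpace K]
    (r : ℝ) (hr0 : 0 < r) (hr1 : r < 1)
    (Y Y' : K →L[ℂ] K) (hYinv : Y * Y' = 1) (hYinv' : Y' * Y = 1)
    (hYpick : (((r⁻¹ ^ 2 + r ^ 2 : ℝ) : ℂ) • (1 : K →L[ℂ] K)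
      - adjoint Y * Y - adjoint Y' * Y').IsPositive)
    (T T' : H →L[ℂ] H) (hTinv : T * T' = 1) (hTinv' : T' * T = 1)
    (V : H →L[ℂ] K) (hV : ∀ x, ‖V x‖ = ‖x‖)
    (hT : T = adjoint V ∘L Y ∘L V) (hT' : T' = adjoint V ∘L Y' ∘L V) :
    (((r⁻¹ ^ 2 + r ^ 2 : ℝ) : ℂ) • (1 : H →L[ℂ] H)
      - adjoint T * T - adjoint T' * T').IsPositive := by
  subst hT hT'
  have hV_norm : ‖V‖ ≤ 1 := V.opNorm_le_bound zero_le_one fun x ↦ by rw [hV, one_mul]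
  simpa only [Fin.sum_univ_two, sub_sub] using!
    pick_annulus_closed_dilations_general (c := r⁻¹ ^ 2 + r ^ 2) (by positivity) hV_norm ![Y, Y']
      (by simpa only [Fin.sum_univ_two, sub_sub] using! hYpick)

end
end

section
/- Fix 0 < r < 1. Let K be a complex Hilbert space, let Y ∈ ℙ𝔸_r[K], let H be a complex Hilbert space, and let V : H → K be a linear isometry whose range is invariant under both Y and Y⁻¹. Then the operator T = V* Y V on H is invertible with T⁻¹ = V* Y⁻¹ V, and T ∈ ℙ𝔸_r[H]; that is, ℙ𝔸_r is closed with respect to restrictions to subspaces invariant for Y and Y⁻¹. -/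
open ContinuousLinearMap

noncomputable section

/-!
Write `C(A) = V* A V` for the compression of `A` along the isometry `V`. Invariance of the range
of `V` under `B` means `V C(B) = B V`, and hence `C(A B) = C(A) C(B)` for every `A`. So `C` carries
the relations `Y Y' = Y' Y = 1` to `C(Y)` and `C(Y')`, and it carries the defect
`c - Y* Y - Y'* Y'` to the defect of the compressed pair, while always preserving positivity.
-/

section Compression

variable {𝕜 H K : Type*} [RCLike 𝕜]
  [NormedAddCommGroup H] [InnerProductSpace 𝕜 H] [CompleteSpace H]
  [NormedAddCommGroup K] [InnerProductSpace 𝕜 K] [CompleteSpace K]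

/-- The compression `V* A V` to `H` of an operator `A` on `K` along `V : H → K`, as a linear map
in `A`. The operator `V` is arbitrary here; for an isometry this is compression to its range. -/
def compression (V : H →L[𝕜] K) : (K →L[𝕜] K) →ₗ[𝕜] (H →L[𝕜] H) where
  toFun A := adjoint V ∘L A ∘L V
  map_add' A B := by rw [add_comp, comp_add]
  map_smul' c A := by rw [smul_comp, comp_smul, RingHom.id_apply]

theorem compression_apply (V : H →L[𝕜] K) (A : K →L[𝕜] K) :
    compression V A = adjoint V ∘L A ∘L V :=
  rfl

theorem compression_one {V : H →L[𝕜] K} (hV : adjoint V ∘L V = 1) : compression V 1 = 1 :=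
  hV

theorem adjoint_compression (V : H →L[𝕜] K) (A : K →L[𝕜] K) :
    adjoint (compression V A) = compression V (adjoint A) := by
  simp only [compression_apply, adjoint_comp, adjoint_adjoint, comp_assoc]

theorem comp_compression_of_mapsTo_range {V : H →L[𝕜] K} (hV : adjoint V ∘L V = 1)
    {A : K →L[𝕜] K} (hA : Set.MapsTo A (Set.range V) (Set.range V)) :
    V ∘L compression V A = A ∘L V := by
  ext x
  obtain ⟨z, hz⟩ := hA (Set.mem_range_self x)
  have hz' : adjoint V (V z) = z := DFunLike.congr_fun hV z
  simp only [compression_apply, comp_apply, ← hz, hz']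

theorem compression_mul {V : H →L[𝕜] K} (A : K →L[𝕜] K) {B : K →L[𝕜] K}
    (hB : V ∘L compression V B = B ∘L V) :
    compression V (A * B) = compression V A * compression V B :=
  calc compression V (A * B) = adjoint V ∘L A ∘L (B ∘L V) := rfl
    _ = adjoint V ∘L A ∘L (V ∘L compression V B) := by rw [hB]
    _ = compression V A * compression V B := rfl

theorem compression_adjoint_mul_self {V : H →L[𝕜] K} {A : K →L[𝕜] K}
    (hA : V ∘L compression V A = A ∘L V) :
    compression V (adjoint A * A) = adjoint (compression V A) * compression V A := by
  rw [compression_mul _ hA, adjoint_compression]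

theorem compression_mul_compression_eq_one {V : H →L[𝕜] K} (hV : adjoint V ∘L V = 1)
    {A B : K →L[𝕜] K} (hB : V ∘L compression V B = B ∘L V) (hAB : A * B = 1) :
    compression V A * compression V B = 1 := by
  rw [← compression_mul A hB, hAB, compression_one hV]

theorem isPositive_compression (V : H →L[𝕜] K) {A : K →L[𝕜] K} (hA : A.IsPositive) :
    (compression V A).IsPositive :=
  hA.adjoint_conj V

theorem isPositive_smul_one_sub_adjoint_mul_self_compression {V : H →L[𝕜] K}
    (hV : adjoint V ∘L V = 1) {c : 𝕜} {A B : K →L[𝕜] K}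
    (hA : V ∘L compression V A = A ∘L V) (hB : V ∘L compression V B = B ∘L V)
    (hpos : (c • (1 : K →L[𝕜] K) - adjoint A * A - adjoint B * B).IsPositive) :
    (c • (1 : H →L[𝕜] H) - adjoint (compression V A) * compression V A
      - adjoint (compression V B) * compression V B).IsPositive := by
  simpa only [map_sub, map_smul, compression_one hV, compression_adjoint_mul_self hA,
    compression_adjoint_mul_self hB] using isPositive_compression V hpos

theorem pick_annulus_closed_invariant_restriction_general {c : 𝕜} {Y Y' : K →L[𝕜] K}
    (hYinv : Y * Y' = 1) (hYinv' : Y' * Y = 1)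
    (hYpick : (c • (1 : K →L[𝕜] K) - adjoint Y * Y - adjoint Y' * Y').IsPositive)
    {V : H →L[𝕜] K} (hV : ∀ x, ‖V x‖ = ‖x‖)
    (hran : Set.MapsTo Y (Set.range V) (Set.range V))
    (hran' : Set.MapsTo Y' (Set.range V) (Set.range V)) :
    compression V Y * compression V Y' = 1 ∧ compression V Y' * compression V Y = 1 ∧
      (c • (1 : H →L[𝕜] H) - adjoint (compression V Y) * compression V Y
        - adjoint (compression V Y') * compression V Y').IsPositive := by
  have hVV : adjoint V ∘L V = 1 := (norm_map_iff_adjoint_comp_self V).1 hV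
  have hY := comp_compression_of_mapsTo_range hVV hran
  have hY' := comp_compression_of_mapsTo_range hVV hran'
  exact ⟨compression_mul_compression_eq_one hVV hY' hYinv,
    compression_mul_compression_eq_one hVV hY hYinv',
    isPositive_smul_one_sub_adjoint_mul_self_compression hVV hY hY' hYpick⟩

end Compression

/-- The Pick annulus `ℙ𝔸_r` is closed with respect to restrictions to subspaces invariant
for `Y` and `Y⁻¹`: if `Y ∈ ℙ𝔸_r[K]` and `V : H → K` is an isometry whose range is
invariant under `Y` and `Y⁻¹`, then `T = V* Y V` is invertible with `T⁻¹ = V* Y⁻¹ V`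
and `T ∈ ℙ𝔸_r[H]`. -/
theorem pick_annulus_closed_invariant_restriction {H K : Type*}
    [NormedAddCommGroup H] [InnerProductSpace ℂ H] [CompleteSpace H]
    [NormedAddCommGroup K] [InnerProductSpace ℂ K] [CompleteSpace K]
    (r : ℝ) (hr0 : 0 < r) (hr1 : r < 1)
    (Y Y' : K →L[ℂ] K) (hYinv : Y * Y' = 1) (hYinv' : Y' * Y = 1)
    (hYpick : (((r⁻¹ ^ 2 + r ^ 2 : ℝ) : ℂ) • (1 : K →L[ℂ] K)
      - adjoint Y * Y - adjoint Y' * Y').IsPositive)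
    (V : H →L[ℂ] K) (hV : ∀ x, ‖V x‖ = ‖x‖)
    (hran : ∀ y ∈ Set.range V, Y y ∈ Set.range V)
    (hran' : ∀ y ∈ Set.range V, Y' y ∈ Set.range V)
    (T T' : H →L[ℂ] H)
    (hT : T = adjoint V ∘L Y ∘L V) (hT' : T' = adjoint V ∘L Y' ∘L V) :
    T * T' = 1 ∧ T' * T = 1 ∧
      (((r⁻¹ ^ 2 + r ^ 2 : ℝ) : ℂ) • (1 : H →L[ℂ] H)
        - adjoint T * T - adjoint T' * T').IsPositive := by
  subst hT hT'
  exact pick_annulus_closed_invariant_restriction_general hYinv hYinv' hYpick hV hran hran'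

end
end

section
/- Fix 0 < r < 1. Let H be a complex Hilbert space and let T be an invertible bounded linear operator on H. Then T ∈ ℙ𝔸_r[H] if and only if there exist a complex Hilbert space K, an operator J ∈ 𝒫𝔸_r[K], and a linear isometry V : H → K such that V T = J V (that is, T lifts to an element of 𝒫𝔸_r). -/
open ContinuousLinearMap

noncomputable section

universe u

/-- Membership in `𝒫𝔸_r`: `J = U (r P₊ + r⁻¹ P₋)` with `P₊, P₋` complementary orthogonal
projections and `U` a unitary that is block upper triangular (`P₋ U P₊ = 0`). -/
def memPAscript (r : ℝ) {H : Type*} [NormedAddCommGroup H] [InnerProductSpace ℂ H]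
    [CompleteSpace H] (J : H →L[ℂ] H) : Prop :=
  ∃ Pp Pm U : H →L[ℂ] H, IsOrthProj Pp ∧ IsOrthProj Pm ∧ Pp + Pm = 1 ∧
    adjoint U * U = 1 ∧ U * adjoint U = 1 ∧ Pm * U * Pp = 0 ∧
    J = U * ((r : ℂ) • Pp + (r : ℂ)⁻¹ • Pm)

/-!
Write `J = U (r P₊ + r⁻¹ P₋)`. Triangularity of `U` says exactly that `P₋` does not see the
`P₊`-part of a vector, so `‖P₋ J z‖ ≤ r⁻¹ ‖P₋ z‖`, while
`‖J z‖² = r² ‖z‖² + (r⁻² - r²) ‖P₋ z‖²`. If `V` lifts `T` to `J`, then `B = P₋ V` inherits these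
relations with `T` in place of `J`; the second one determines `‖B x‖` from `‖T x‖`, and the first
one then becomes `‖T² x‖² + ‖x‖² ≤ (r⁻² + r²) ‖T x‖²`, which is the Pick inequality at `T x`.

Conversely, the Pick inequality lets `B` be recovered as a square root: `r ‖x‖ ≤ ‖T x‖`, since
otherwise `‖Tⁿ x‖²` would decrease at least linearly and become negative. A square root `A` of
`1 - B* B` supplies the `P₊`-component. On `ℓ²(ℤ, H)`, with `P₊` the projection onto
sequences supported on the negative integers, let `V x` have entry `A x` at `-2` and `B x` at `0`.
Then `r A x` and `r⁻¹ B x` must be carried to `A T x` and `B T x`; the excess norm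
`‖Δ x‖² = ‖r⁻¹ B x‖² - ‖B T x‖²` has to cross from the `P₋`-side to the `P₊`-side, and this is done
by a reflection on the `P₋`-side, a shift, and a reflection on the `P₊`-side.
-/

section Reflection

variable {𝕜 E F : Type*} [RCLike 𝕜]
  [NormedAddCommGroup E] [InnerProductSpace 𝕜 E] [NormedAddCommGroup F] [InnerProductSpace 𝕜 F]

theorem inner_map_eq_inner_map_of_norm_map_eq {a b : E →ₗ[𝕜] F} (h : ∀ x, ‖a x‖ = ‖b x‖)
    (x y : E) : inner 𝕜 (a x) (a y) = inner 𝕜 (b x) (b y) := by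
  simp only [inner_eq_sum_norm_sq_div_four, ← map_add, ← map_sub, ← map_smul, h]

/- The isometry is the reflection fixing the orthogonal complement of the range of `a - b`, which
contains every `a x + b x`. -/
theorem exists_linearIsometryEquiv_swap [CompleteSpace F] (N : Submodule 𝕜 F) (a b : E →ₗ[𝕜] F)
    (h_norm : ∀ x, ‖a x‖ = ‖b x‖) (h_orth : ∀ x y, inner 𝕜 (a x) (b y) = 0)
    (ha : ∀ x, a x ∈ N) (hb : ∀ x, b x ∈ N) :
    ∃ G : F ≃ₗᵢ[𝕜] F, (∀ x, G (a x) = b x) ∧ ∀ z ∈ Nᗮ, G z = z := by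
  set R := (a - b).range
  have neg_on_range (x : E) : Rᗮ.reflection (a x - b x) = -(a x - b x) :=
    Submodule.reflection_mem_subspace_orthogonalComplement_eq_neg
      (R.le_orthogonal_orthogonal ⟨x, rfl⟩)
  have fixes_of_orthogonal {z : F} (hz : ∀ x, inner 𝕜 (a x - b x) z = 0) :
      Rᗮ.reflection z = z := by
    refine Submodule.reflection_mem_subspace_eq_self ((Submodule.mem_orthogonal R z).2 ?_)
    rintro _ ⟨x, rfl⟩
    exact hz x
  refine ⟨Rᗮ.reflection, fun x => ?_, fun z hz => fixes_of_orthogonal fun x =>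
    Submodule.inner_right_of_mem_orthogonal (N.sub_mem (ha x) (hb x)) hz⟩
  have fixes_sum : Rᗮ.reflection (a x + b x) = a x + b x := by
    refine fixes_of_orthogonal fun y => ?_
    rw [inner_sub_left, inner_add_right, inner_add_right, h_orth,
      inner_eq_zero_symm.1 (h_orth x y), inner_map_eq_inner_map_of_norm_map_eq h_norm]
    ring
  have two_smul_eq : (2 : 𝕜) • Rᗮ.reflection (a x) = (2 : 𝕜) • b x := by
    rw [← map_smul, show (2 : 𝕜) • a x = (a x - b x) + (a x + b x) by rw [two_smul]; abel,
      map_add, neg_on_range, fixes_sum, two_smul]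
    abel
  exact smul_right_injective F two_ne_zero two_smul_eq

theorem map_mem_of_fixes_orthogonal {M : Submodule 𝕜 F} [M.HasOrthogonalProjection]
    {G : F ≃ₗᵢ[𝕜] F} (hG : ∀ z ∈ Mᗮ, G z = z) {z : F} (hz : z ∈ M) : G z ∈ M := by
  rw [← M.orthogonal_orthogonal, Submodule.mem_orthogonal]
  intro u hu
  rw [← hG u hu, G.inner_map_map]
  exact Submodule.inner_left_of_mem_orthogonal hz hu

end Reflection

section SequenceSpace

open scoped lp

variable {ι E : Type*} (𝕜 : Type*) [RCLike 𝕜] [NormedAddCommGroup E] [InnerProductSpace 𝕜 E]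

theorem memℓp_two_comp_equiv (σ : ι ≃ ι) (f : ℓ²(ι, E)) : Memℓp (fun i => f (σ i)) 2 :=
  memℓp_gen (σ.summable_iff.2 ((memℓp_gen_iff (by norm_num)).1 (lp.memℓp f)))

/-- The unitary of `ℓ²(ι, E)` given by the substitution `f ↦ f ∘ σ` for a permutation `σ` of `ι`;
translations of `ℤ` give the powers of the bilateral shift. -/
def l2Reindex (σ : ι ≃ ι) : ℓ²(ι, E) ≃ₗᵢ[𝕜] ℓ²(ι, E) where
  toFun f := ⟨fun i => f (σ i), memℓp_two_comp_equiv σ f⟩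
  invFun f := ⟨fun i => f (σ.symm i), memℓp_two_comp_equiv σ.symm f⟩
  map_add' _ _ := rfl
  map_smul' _ _ := rfl
  left_inv f := by ext i; simp
  right_inv f := by ext i; simp
  norm_map' f := by
    have two_pos : 0 < (2 : ENNReal).toReal := by norm_num
    rw [lp.norm_eq_tsum_rpow two_pos, lp.norm_eq_tsum_rpow two_pos]
    exact congrArg (· ^ _) (σ.tsum_eq fun i => ‖f i‖ ^ (2 : ENNReal).toReal)

theorem l2Reindex_apply (σ : ι ≃ ι) (f : ℓ²(ι, E)) (i : ι) : l2Reindex 𝕜 σ f i = f (σ i) := rfl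

/-- The closed subspace of `ℓ²(ι, E)` of families supported on `s`. -/
def l2SupportedOn (E : Type*) [NormedAddCommGroup E] [InnerProductSpace 𝕜 E] (s : Set ι) :
    Submodule 𝕜 ℓ²(ι, E) where
  carrier := {f | ∀ i ∉ s, f i = 0}
  zero_mem' _ _ := rfl
  add_mem' hf hg i hi := by simp [hf i hi, hg i hi]
  smul_mem' c f hf i hi := by simp [hf i hi]

instance [CompleteSpace E] (s : Set ι) : CompleteSpace (l2SupportedOn 𝕜 E s) := by
  have isClosed_carrier : IsClosed {f : ℓ²(ι, E) | ∀ i ∉ s, f i = 0} := by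
    simp only [Set.ofPred_forall]
    exact isClosed_iInter fun i => isClosed_iInter fun _ =>
      isClosed_eq (lp.evalCLM 𝕜 (fun _ : ι => E) 2 i).continuous continuous_const
  exact isClosed_carrier.completeSpace_coe

variable [DecidableEq ι]

theorem l2Reindex_single (σ : ι ≃ ι) (i : ι) (x : E) :
    l2Reindex 𝕜 σ (lp.single 2 i x) = lp.single 2 (σ.symm i) x := by
  ext j
  simp [l2Reindex_apply, Pi.single_apply, Equiv.eq_symm_apply]

theorem inner_single_single_of_ne {i j : ι} (hij : i ≠ j) (x y : E) :
    inner 𝕜 (lp.single (E := fun _ => E) 2 i x) (lp.single 2 j y) = 0 := by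
  rw [lp.inner_single_left, lp.single_apply_ne _ _ _ hij, inner_zero_right]

include 𝕜 in
theorem norm_sq_single_add_single {i j : ι} (hij : i ≠ j) (x y : E) :
    ‖lp.single (E := fun _ => E) 2 i x + lp.single 2 j y‖ ^ 2 = ‖x‖ ^ 2 + ‖y‖ ^ 2 := by
  simpa only [sq, lp.norm_single two_pos] using
    norm_add_sq_eq_norm_sq_add_norm_sq_of_inner_eq_zero _ _ (inner_single_single_of_ne 𝕜 hij x y)

variable {s : Set ι} {i : ι}

theorem single_mem_l2SupportedOn (hi : i ∈ s) (x : E) : lp.single 2 i x ∈ l2SupportedOn 𝕜 E s :=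
  fun _ hj => lp.single_apply_ne _ _ _ (ne_of_mem_of_not_mem hi hj).symm

theorem single_mem_orthogonal_l2SupportedOn (hi : i ∉ s) (x : E) :
    lp.single 2 i x ∈ (l2SupportedOn 𝕜 E s)ᗮ := by
  refine (Submodule.mem_orthogonal _ _).2 fun f hf => ?_
  rw [lp.inner_single_right, hf i hi, inner_zero_left]

theorem exists_linearIsometryEquiv_split_single {F : Type*} [NormedAddCommGroup F]
    [InnerProductSpace 𝕜 F] [CompleteSpace E] {i j k : ι} (hij : i ≠ j) (hik : i ≠ k) (hjk : j ≠ k)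
    {N : Submodule 𝕜 ℓ²(ι, E)} (hi : ∀ x, lp.single 2 i x ∈ N) (hj : ∀ x, lp.single 2 j x ∈ N)
    (hk : ∀ x, lp.single 2 k x ∈ N) {X Y Z : F →ₗ[𝕜] E}
    (h_norm : ∀ x, ‖X x‖ ^ 2 = ‖Y x‖ ^ 2 + ‖Z x‖ ^ 2) :
    ∃ G : ℓ²(ι, E) ≃ₗᵢ[𝕜] ℓ²(ι, E),
      (∀ x, G (lp.single 2 i (X x)) = lp.single 2 j (Y x) + lp.single 2 k (Z x)) ∧
      ∀ f ∈ Nᗮ, G f = f := by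
  let e (n : ι) : E →ₗ[𝕜] ℓ²(ι, E) := lp.lsingle (E := fun _ => E) 2 n
  refine exists_linearIsometryEquiv_swap N (e i ∘ₗ X) (e j ∘ₗ Y + e k ∘ₗ Z) (fun x => ?_)
    (fun x y => ?_) (fun x => hi _) (fun x => add_mem (hj _) (hk _))
  · change ‖lp.single (E := fun _ => E) 2 i (X x)‖ =
      ‖lp.single (E := fun _ => E) 2 j (Y x) + lp.single 2 k (Z x)‖
    rw [← sq_eq_sq₀ (norm_nonneg _) (norm_nonneg _), norm_sq_single_add_single 𝕜 hjk,
      lp.norm_single two_pos, h_norm]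
  · change inner 𝕜 (lp.single (E := fun _ => E) 2 i (X x))
      (lp.single 2 j (Y y) + lp.single 2 k (Z y)) = 0
    rw [inner_add_right, inner_single_single_of_ne 𝕜 hij, inner_single_single_of_ne 𝕜 hik, add_zero]

/- The unitary splits the entry at `0` into entries at `1` and `2`, translates by `-2`, and merges
the entries now at `-4` and `-1` into one at `-2`. -/
theorem exists_unitary_extension {F : Type*} [NormedAddCommGroup F] [InnerProductSpace 𝕜 F]
    [CompleteSpace E] {X Y X' Y' Δ : F →ₗ[𝕜] E}
    (hY : ∀ x, ‖Y x‖ ^ 2 = ‖Δ x‖ ^ 2 + ‖Y' x‖ ^ 2) (hX : ∀ x, ‖X' x‖ ^ 2 = ‖X x‖ ^ 2 + ‖Δ x‖ ^ 2) :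
    ∃ U : ℓ²(ℤ, E) ≃ₗᵢ[𝕜] ℓ²(ℤ, E),
      (∀ f ∈ l2SupportedOn 𝕜 E (Set.Iio (0 : ℤ)), U f ∈ l2SupportedOn 𝕜 E (Set.Iio 0)) ∧
      ∀ x, U (lp.single 2 (-2) (X x) + lp.single 2 0 (Y x)) =
        lp.single 2 (-2) (X' x) + lp.single 2 0 (Y' x) := by
  set M := l2SupportedOn 𝕜 E (Set.Iio (0 : ℤ))
  have mem_M {n : ℤ} (hn : n < 0) (x : E) : lp.single 2 n x ∈ M :=
    single_mem_l2SupportedOn 𝕜 (Set.mem_Iio.2 hn) x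
  have mem_M_orth {n : ℤ} (hn : 0 ≤ n) (x : E) : lp.single 2 n x ∈ Mᗮ :=
    single_mem_orthogonal_l2SupportedOn 𝕜 (Set.notMem_Iio.2 hn) x
  obtain ⟨G, G_split, G_fix_orth⟩ := exists_linearIsometryEquiv_split_single 𝕜
    (i := (0 : ℤ)) (j := 1) (k := 2) (by decide) (by decide) (by decide)
    (mem_M_orth (by decide)) (mem_M_orth (by decide)) (mem_M_orth (by decide)) hY
  obtain ⟨G', G'_split, G'_fix⟩ := exists_linearIsometryEquiv_split_single 𝕜
    (i := (-2 : ℤ)) (j := -4) (k := -1) (by decide) (by decide) (by decide)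
    (mem_M (by decide)) (mem_M (by decide)) (mem_M (by decide)) hX
  have G_fix {f : ℓ²(ℤ, E)} (hf : f ∈ M) : G f = f := G_fix_orth f (M.le_orthogonal_orthogonal hf)
  have G'_symm_fix (f : ℓ²(ℤ, E)) (hf : f ∈ Mᗮ) : G'.symm f = f := by
    rw [G'.symm_apply_eq, G'_fix f hf]
  let S : ℓ²(ℤ, E) ≃ₗᵢ[𝕜] ℓ²(ℤ, E) := l2Reindex 𝕜 (Equiv.addRight 2)
  have S_single (n : ℤ) (x : E) : S (lp.single 2 n x) = lp.single 2 (n - 2) x :=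
    l2Reindex_single 𝕜 (Equiv.addRight 2) n x
  have S_mem {f : ℓ²(ℤ, E)} (hf : f ∈ M) : S f ∈ M := fun n hn =>
    hf _ fun hn' : n + 2 < 0 => hn (by rw [Set.mem_Iio]; omega)
  refine ⟨(G.trans S).trans G'.symm, fun f hf => ?_, fun x => ?_⟩
  · change G'.symm (S (G f)) ∈ M
    rw [G_fix hf]
    exact map_mem_of_fixes_orthogonal G'_symm_fix (S_mem hf)
  · change G'.symm (S (G _)) = _
    rw [map_add G, G_fix (mem_M (by decide) _), G_split, map_add S, map_add S, S_single, S_single,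
      S_single, ← add_assoc, map_add G'.symm, G'_symm_fix _ (mem_M_orth (by decide) _)]
    exact congrArg (· + _) (G'.symm_apply_eq.2 (G'_split x).symm)

end SequenceSpace

section ConcaveSequence

theorem mul_le_of_concave_recurrence {q : ℝ} (hq0 : 0 < q) (hq1 : q ≤ 1) {a : ℕ → ℝ}
    (h_nonneg : ∀ n, 0 ≤ a n) (h_rec : ∀ n, a (n + 2) + a n ≤ (q⁻¹ + q) * a (n + 1)) :
    q * a 0 ≤ a 1 := by
  by_contra! defect_neg
  have defect_le (n : ℕ) : a (n + 1) - q * a n ≤ a 1 - q * a 0 := by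
    induction n with
    | zero => rfl
    | succ n ih =>
      have one_le_inv : 1 ≤ q⁻¹ := (one_le_inv₀ hq0).2 hq1
      calc a (n + 2) - q * a (n + 1) ≤ q⁻¹ * (a (n + 1) - q * a n) := by
            rw [mul_sub, inv_mul_cancel_left₀ hq0.ne']
            linarith [h_rec n]
        _ ≤ a (n + 1) - q * a n := by nlinarith
        _ ≤ a 1 - q * a 0 := ih
  have le_linear (n : ℕ) : a n ≤ a 0 - n * (q * a 0 - a 1) := by
    induction n with
    | zero => simp
    | succ n ih =>
      push_cast
      nlinarith [defect_le n, h_nonneg n]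
  obtain ⟨n, hn⟩ := exists_nat_gt (a 0 / (q * a 0 - a 1))
  rw [div_lt_iff₀ (sub_pos.2 defect_neg)] at hn
  linarith [le_linear n, h_nonneg n]

theorem mul_norm_le_norm_map {E : Type*} [SeminormedAddCommGroup E] {r : ℝ} (hr0 : 0 < r)
    (hr1 : r ≤ 1) {f : E → E}
    (hf : ∀ x, ‖f (f x)‖ ^ 2 + ‖x‖ ^ 2 ≤ (r⁻¹ ^ 2 + r ^ 2) * ‖f x‖ ^ 2) (x : E) :
    r * ‖x‖ ≤ ‖f x‖ := by
  refine (sq_le_sq₀ (by positivity) (norm_nonneg _)).1 ?_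
  rw [mul_pow]
  refine mul_le_of_concave_recurrence (a := fun n => ‖f^[n] x‖ ^ 2) (pow_pos hr0 2)
    (pow_le_one₀ hr0.le hr1) (fun n => by positivity) fun n => ?_
  simpa only [Function.iterate_succ_apply', inv_pow] using hf (f^[n] x)

end ConcaveSequence

section MinusComponent

variable {𝕜 E F H : Type*} [NontriviallyNormedField 𝕜] [SeminormedAddCommGroup E]
  [NormedSpace 𝕜 E] [SeminormedAddCommGroup F] [NormedSpace 𝕜 F] [SeminormedAddCommGroup H]
  [NormedSpace 𝕜 H] {r : ℝ} {T : H →L[𝕜] H}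

/-- `B` behaves, in relation to `T`, like `P₋` in relation to an element `U (r P₊ + r⁻¹ P₋)` of
`𝒫𝔸_r`. Such maps mediate between lifts of `T` and the Pick inequality. -/
structure IsMinusComponent (r : ℝ) (T : H →L[𝕜] H) (B : H →L[𝕜] E) : Prop where
  norm_le (x : H) : ‖B x‖ ≤ ‖x‖
  norm_sq_map (x : H) : ‖T x‖ ^ 2 = r ^ 2 * ‖x‖ ^ 2 + (r⁻¹ ^ 2 - r ^ 2) * ‖B x‖ ^ 2
  norm_comp_le (x : H) : ‖B (T x)‖ ≤ r⁻¹ * ‖B x‖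

theorem sq_le_inv_sq (hr0 : 0 < r) (hr1 : r ≤ 1) : r ^ 2 ≤ r⁻¹ ^ 2 := by
  gcongr
  exact hr1.trans ((one_le_inv₀ hr0).2 hr1)

namespace IsMinusComponent

theorem comp_isometry {J : F →L[𝕜] F} {B : F →L[𝕜] E} (hB : IsMinusComponent r J B)
    {V : H →L[𝕜] F} (hV : ∀ x, ‖V x‖ = ‖x‖) (hVT : V ∘L T = J ∘L V) :
    IsMinusComponent r T (B ∘L V) := by
  have intertwine (x : H) : V (T x) = J (V x) := DFunLike.congr_fun hVT x
  refine ⟨fun x => ?_, fun x => ?_, fun x => ?_⟩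
  · simpa only [comp_apply, hV] using hB.norm_le (V x)
  · simpa only [comp_apply, ← intertwine, hV] using hB.norm_sq_map (V x)
  · simpa only [comp_apply, ← intertwine] using hB.norm_comp_le (V x)

theorem opNorm_le (hr0 : 0 < r) (hr1 : r ≤ 1) {B : H →L[𝕜] E} (hB : IsMinusComponent r T B) :
    ‖T‖ ≤ r⁻¹ := by
  refine T.opNorm_le_bound (inv_nonneg.2 hr0.le) fun x => ?_
  refine (sq_le_sq₀ (norm_nonneg _) (by positivity)).1 ?_
  have c_nonneg : 0 ≤ r⁻¹ ^ 2 - r ^ 2 := sub_nonneg.2 (sq_le_inv_sq hr0 hr1)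
  calc ‖T x‖ ^ 2 = r ^ 2 * ‖x‖ ^ 2 + (r⁻¹ ^ 2 - r ^ 2) * ‖B x‖ ^ 2 := hB.norm_sq_map x
    _ ≤ r ^ 2 * ‖x‖ ^ 2 + (r⁻¹ ^ 2 - r ^ 2) * ‖x‖ ^ 2 := by
        gcongr
        exact hB.norm_le x
    _ = (r⁻¹ * ‖x‖) ^ 2 := by ring

theorem norm_sq_map_map_add_norm_sq_le (hr0 : 0 < r) (hr1 : r ≤ 1) {B : H →L[𝕜] E}
    (hB : IsMinusComponent r T B) (x : H) :
    ‖T (T x)‖ ^ 2 + ‖x‖ ^ 2 ≤ (r⁻¹ ^ 2 + r ^ 2) * ‖T x‖ ^ 2 := by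
  have c_nonneg : 0 ≤ r⁻¹ ^ 2 - r ^ 2 := sub_nonneg.2 (sq_le_inv_sq hr0 hr1)
  have excess_le : ‖T (T x)‖ ^ 2 - r ^ 2 * ‖T x‖ ^ 2 ≤
      r⁻¹ ^ 2 * (‖T x‖ ^ 2 - r ^ 2 * ‖x‖ ^ 2) :=
    calc ‖T (T x)‖ ^ 2 - r ^ 2 * ‖T x‖ ^ 2 = (r⁻¹ ^ 2 - r ^ 2) * ‖B (T x)‖ ^ 2 := by
          rw [hB.norm_sq_map (T x)]; ring
      _ ≤ (r⁻¹ ^ 2 - r ^ 2) * (r⁻¹ * ‖B x‖) ^ 2 := by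
          gcongr
          exact hB.norm_comp_le x
      _ = r⁻¹ ^ 2 * (‖T x‖ ^ 2 - r ^ 2 * ‖x‖ ^ 2) := by rw [hB.norm_sq_map x]; ring
  have cancel : r⁻¹ ^ 2 * (r ^ 2 * ‖x‖ ^ 2) = ‖x‖ ^ 2 := by field_simp
  linarith

theorem of_norm_sq_map (hr0 : 0 < r) (hc : 0 < r⁻¹ ^ 2 - r ^ 2) (h_norm : ‖T‖ ≤ r⁻¹)
    (h_pick : ∀ x, ‖T (T x)‖ ^ 2 + ‖x‖ ^ 2 ≤ (r⁻¹ ^ 2 + r ^ 2) * ‖T x‖ ^ 2) {B : H →L[𝕜] E}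
    (hB : ∀ x, ‖T x‖ ^ 2 = r ^ 2 * ‖x‖ ^ 2 + (r⁻¹ ^ 2 - r ^ 2) * ‖B x‖ ^ 2) :
    IsMinusComponent r T B := by
  refine ⟨fun x => ?_, hB, fun x => ?_⟩
  · refine (sq_le_sq₀ (norm_nonneg _) (norm_nonneg _)).1 (le_of_mul_le_mul_left ?_ hc)
    calc (r⁻¹ ^ 2 - r ^ 2) * ‖B x‖ ^ 2 = ‖T x‖ ^ 2 - r ^ 2 * ‖x‖ ^ 2 := by rw [hB]; ring
      _ ≤ (r⁻¹ * ‖x‖) ^ 2 - r ^ 2 * ‖x‖ ^ 2 := by gcongr; exact T.le_of_opNorm_le h_norm x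
      _ = (r⁻¹ ^ 2 - r ^ 2) * ‖x‖ ^ 2 := by ring
  · refine (sq_le_sq₀ (norm_nonneg _) (by positivity)).1 (le_of_mul_le_mul_left ?_ hc)
    have cancel : r⁻¹ ^ 2 * (r ^ 2 * ‖x‖ ^ 2) = ‖x‖ ^ 2 := by field_simp
    calc (r⁻¹ ^ 2 - r ^ 2) * ‖B (T x)‖ ^ 2 = ‖T (T x)‖ ^ 2 - r ^ 2 * ‖T x‖ ^ 2 := by
          rw [hB (T x)]; ring
      _ ≤ r⁻¹ ^ 2 * (‖T x‖ ^ 2 - r ^ 2 * ‖x‖ ^ 2) := by linarith [h_pick x]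
      _ = (r⁻¹ ^ 2 - r ^ 2) * (r⁻¹ * ‖B x‖) ^ 2 := by rw [hB x]; ring

end IsMinusComponent

end MinusComponent

section DefectOperator

variable {E F H : Type*} [NormedAddCommGroup E] [InnerProductSpace ℂ E] [CompleteSpace E]
  [NormedAddCommGroup F] [InnerProductSpace ℂ F] [CompleteSpace F] [NormedAddCommGroup H]
  [InnerProductSpace ℂ H] [CompleteSpace H]

theorem exists_norm_sq_eq_sub {X : H →L[ℂ] E} {Y : H →L[ℂ] F} (h : ∀ x, ‖Y x‖ ≤ ‖X x‖) :
    ∃ D : H →L[ℂ] H, ∀ x, ‖D x‖ ^ 2 = ‖X x‖ ^ 2 - ‖Y x‖ ^ 2 := by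
  set Q : H →L[ℂ] H := adjoint X ∘L X - adjoint Y ∘L Y with Q_def
  have re_inner_Q (x : H) : RCLike.re (inner ℂ (Q x) x) = ‖X x‖ ^ 2 - ‖Y x‖ ^ 2 := by
    rw [apply_norm_sq_eq_inner_adjoint_left, apply_norm_sq_eq_inner_adjoint_left, Q_def,
      sub_apply, inner_sub_left, map_sub]
  have Q_nonneg : 0 ≤ Q := by
    rw [nonneg_iff_isPositive, isPositive_def']
    refine ⟨X.isPositive_adjoint_comp_self.isSelfAdjoint.sub
      Y.isPositive_adjoint_comp_self.isSelfAdjoint, fun x => ?_⟩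
    rw [reApplyInnerSelf, re_inner_Q, sub_nonneg]
    gcongr
    exact h x
  obtain ⟨D, hD⟩ := CStarAlgebra.nonneg_iff_eq_star_mul_self.1 Q_nonneg
  refine ⟨D, fun x => ?_⟩
  rw [← re_inner_Q, hD]
  exact apply_norm_sq_eq_inner_adjoint_left D x

theorem exists_isMinusComponent {r : ℝ} (hr0 : 0 < r) (hr1 : r < 1) {T : H →L[ℂ] H}
    (h_norm : ‖T‖ ≤ r⁻¹)
    (h_pick : ∀ x, ‖T (T x)‖ ^ 2 + ‖x‖ ^ 2 ≤ (r⁻¹ ^ 2 + r ^ 2) * ‖T x‖ ^ 2) :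
    ∃ B : H →L[ℂ] H, IsMinusComponent r T B := by
  obtain ⟨D, hD⟩ := exists_norm_sq_eq_sub (X := T) (Y := (r : ℂ) • (1 : H →L[ℂ] H)) fun x => by
    simpa [norm_smul, abs_of_pos hr0] using mul_norm_le_norm_map hr0 hr1.le h_pick x
  set c := r⁻¹ ^ 2 - r ^ 2
  have c_pos : 0 < c :=
    sub_pos.2 (pow_lt_pow_left₀ (hr1.trans ((one_lt_inv₀ hr0).2 hr1)) hr0.le two_ne_zero)
  refine ⟨((√c : ℝ) : ℂ)⁻¹ • D, .of_norm_sq_map hr0 c_pos h_norm h_pick fun x => ?_⟩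
  calc ‖T x‖ ^ 2 = r ^ 2 * ‖x‖ ^ 2 + ‖D x‖ ^ 2 := by
        rw [hD, smul_apply, one_apply_eq_self, norm_smul, mul_pow, Complex.norm_real,
          Real.norm_eq_abs, sq_abs, add_sub_cancel]
    _ = r ^ 2 * ‖x‖ ^ 2 + c * ‖(((√c : ℝ) : ℂ)⁻¹ • D) x‖ ^ 2 := by
        rw [smul_apply, norm_smul, mul_pow, norm_inv, inv_pow, Complex.norm_real,
          Real.norm_eq_abs, sq_abs, Real.sq_sqrt c_pos.le, mul_inv_cancel_left₀ c_pos.ne']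

end DefectOperator

section PickAnnulus

open scoped lp

variable {H K : Type*} [NormedAddCommGroup H] [InnerProductSpace ℂ H] [CompleteSpace H]
  [NormedAddCommGroup K] [InnerProductSpace ℂ K] [CompleteSpace K] {r : ℝ}

theorem isOrthProj_iff_isStarProjection_s12 {P : K →L[ℂ] K} : IsOrthProj P ↔ IsStarProjection P :=
  ⟨fun h => ⟨h.2, h.1⟩, fun h => ⟨h.isSelfAdjoint, h.isIdempotentElem⟩⟩

theorem isOrthProj_starProjection (M : Submodule ℂ K) [M.HasOrthogonalProjection] :
    IsOrthProj M.starProjection :=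
  isOrthProj_iff_isStarProjection_s12.2 isStarProjection_starProjection

theorem memPAscript_iff_exists_submodule {J : K →L[ℂ] K} :
    memPAscript r J ↔ ∃ (M : Submodule ℂ K) (_ : M.HasOrthogonalProjection) (U : K ≃ₗᵢ[ℂ] K),
      (∀ z ∈ M, U z ∈ M) ∧
      ∀ z, J z = U ((r : ℂ) • M.starProjection z + (r : ℂ)⁻¹ • Mᗮ.starProjection z) := by
  constructor
  · rintro ⟨Pp, Pm, U, hPp, -, h_sum, hU, hU', h_triangular, rfl⟩
    obtain ⟨M, _, rfl⟩ := isStarProjection_iff_eq_starProjection.1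
      (isOrthProj_iff_isStarProjection_s12.1 hPp)
    obtain rfl : Pm = Mᗮ.starProjection := by
      rw [Submodule.starProjection_orthogonal']
      exact eq_sub_of_add_eq' h_sum
    refine ⟨M, ‹_›, Unitary.linearIsometryEquiv ⟨U, hU, hU'⟩, fun z hz => ?_, fun z => rfl⟩
    have orth_part_eq_zero : Mᗮ.starProjection (U (M.starProjection z)) = 0 :=
      DFunLike.congr_fun h_triangular z
    rwa [Submodule.starProjection_eq_self_iff.2 hz, Submodule.starProjection_apply_eq_zero_iff,
      Submodule.orthogonal_orthogonal] at orth_part_eq_zero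
  · rintro ⟨M, _, U, U_mem, hJ⟩
    have U_unitary := Unitary.mem_iff.1 (Unitary.linearIsometryEquiv.symm U).2
    refine ⟨M.starProjection, Mᗮ.starProjection, U, isOrthProj_starProjection M,
      isOrthProj_starProjection Mᗮ, ?_, ?_, ?_, ?_, ext hJ⟩
    · ext z
      exact M.starProjection_add_starProjection_orthogonal z
    · exact U_unitary.1
    · exact U_unitary.2
    · ext z
      exact (Submodule.starProjection_apply_eq_zero_iff _).2
        (M.le_orthogonal_orthogonal (U_mem _ (M.starProjection_apply_mem z)))

theorem memPAscript.exists_isMinusComponent (hr0 : 0 < r) {J : K →L[ℂ] K} (hJ : memPAscript r J) :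
    ∃ B : K →L[ℂ] K, IsMinusComponent r J B := by
  obtain ⟨M, _, U, U_mem, hJ⟩ := memPAscript_iff_exists_submodule.1 hJ
  refine ⟨Mᗮ.starProjection, Mᗮ.norm_starProjection_apply_le, fun z => ?_, fun z => ?_⟩
  · have inner_eq_zero : inner ℂ ((r : ℂ) • M.starProjection z)
        ((r : ℂ)⁻¹ • Mᗮ.starProjection z) = 0 :=
      Submodule.inner_right_of_mem_orthogonal (M.smul_mem _ (M.starProjection_apply_mem z))
        (Mᗮ.smul_mem _ (Mᗮ.starProjection_apply_mem z))
    rw [hJ, U.norm_map, sq, norm_add_sq_eq_norm_sq_add_norm_sq_of_inner_eq_zero _ _ inner_eq_zero,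
      norm_smul, norm_smul, norm_inv, Complex.norm_of_nonneg hr0.le,
      Submodule.norm_sq_eq_add_norm_sq_starProjection z M]
    ring
  · have U_map_M : Mᗮ.starProjection (U ((r : ℂ) • M.starProjection z)) = 0 :=
      (Submodule.starProjection_apply_eq_zero_iff _).2 (M.le_orthogonal_orthogonal
        (U_mem _ (M.smul_mem _ (M.starProjection_apply_mem z))))
    calc ‖Mᗮ.starProjection (J z)‖
        = ‖Mᗮ.starProjection (U ((r : ℂ)⁻¹ • Mᗮ.starProjection z))‖ := by
          rw [hJ, map_add U, map_add, U_map_M, zero_add]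
      _ ≤ ‖(r : ℂ)⁻¹ • Mᗮ.starProjection z‖ :=
          (Mᗮ.norm_starProjection_apply_le _).trans_eq (U.norm_map _)
      _ = r⁻¹ * ‖Mᗮ.starProjection z‖ := by
          rw [norm_smul, norm_inv, Complex.norm_of_nonneg hr0.le]

theorem exists_lift_of_unitary {T A B : H →L[ℂ] H} (hAB : ∀ x, ‖A x‖ ^ 2 + ‖B x‖ ^ 2 = ‖x‖ ^ 2)
    {U : ℓ²(ℤ, H) ≃ₗᵢ[ℂ] ℓ²(ℤ, H)}
    (U_mem : ∀ f ∈ l2SupportedOn ℂ H (Set.Iio (0 : ℤ)), U f ∈ l2SupportedOn ℂ H (Set.Iio 0))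
    (U_map : ∀ x, U (lp.single 2 (-2) ((r : ℂ) • A x) + lp.single 2 0 ((r : ℂ)⁻¹ • B x)) =
      lp.single 2 (-2) (A (T x)) + lp.single 2 0 (B (T x))) :
    ∃ (J : ℓ²(ℤ, H) →L[ℂ] ℓ²(ℤ, H)) (V : H →L[ℂ] ℓ²(ℤ, H)),
      memPAscript r J ∧ (∀ x, ‖V x‖ = ‖x‖) ∧ V ∘L T = J ∘L V := by
  set M := l2SupportedOn ℂ H (Set.Iio (0 : ℤ))
  let e (n : ℤ) : H →L[ℂ] ℓ²(ℤ, H) := lp.singleContinuousLinearMap ℂ (fun _ => H) 2 n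
  let V : H →L[ℂ] ℓ²(ℤ, H) := e (-2) ∘L A + e 0 ∘L B
  refine ⟨U ∘L ((r : ℂ) • M.starProjection + (r : ℂ)⁻¹ • Mᗮ.starProjection), V,
    memPAscript_iff_exists_submodule.2 ⟨M, inferInstance, U, U_mem, fun z => rfl⟩, fun x => ?_, ?_⟩
  · rw [← sq_eq_sq₀ (norm_nonneg _) (norm_nonneg _), ← hAB]
    exact norm_sq_single_add_single ℂ (by decide) _ _
  · ext1 x
    have fst_mem : e (-2) (A x) ∈ M := single_mem_l2SupportedOn ℂ (by decide) _
    have snd_mem : e 0 (B x) ∈ Mᗮ := single_mem_orthogonal_l2SupportedOn ℂ (by decide) _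
    have fst_eq : M.starProjection (V x) = e (-2) (A x) :=
      Submodule.eq_starProjection_of_mem_orthogonal' fst_mem snd_mem rfl
    have snd_eq : Mᗮ.starProjection (V x) = e 0 (B x) :=
      Submodule.eq_starProjection_of_mem_orthogonal' snd_mem (M.le_orthogonal_orthogonal fst_mem)
        (add_comm _ _)
    change V (T x) = U ((r : ℂ) • M.starProjection (V x) + (r : ℂ)⁻¹ • Mᗮ.starProjection (V x))
    rw [fst_eq, snd_eq, ← map_smul (e _), ← map_smul (e _)]
    exact (U_map x).symm

theorem IsMinusComponent.exists_lift (hr0 : 0 < r) {T B : H →L[ℂ] H} (hB : IsMinusComponent r T B) :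
    ∃ (J : ℓ²(ℤ, H) →L[ℂ] ℓ²(ℤ, H)) (V : H →L[ℂ] ℓ²(ℤ, H)),
      memPAscript r J ∧ (∀ x, ‖V x‖ = ‖x‖) ∧ V ∘L T = J ∘L V := by
  obtain ⟨A, hA⟩ : ∃ A : H →L[ℂ] H, ∀ x, ‖A x‖ ^ 2 = ‖x‖ ^ 2 - ‖B x‖ ^ 2 :=
    exists_norm_sq_eq_sub (X := 1) hB.norm_le
  obtain ⟨Δ, hΔ⟩ : ∃ Δ : H →L[ℂ] H, ∀ x, ‖Δ x‖ ^ 2 = ‖(r : ℂ)⁻¹ • B x‖ ^ 2 - ‖B (T x)‖ ^ 2 :=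
    exists_norm_sq_eq_sub (X := (r : ℂ)⁻¹ • B) (Y := B ∘L T) fun x => by
      simpa [norm_smul, abs_of_pos hr0] using hB.norm_comp_le x
  have norm_sq_A_map (x : H) : ‖A (T x)‖ ^ 2 = ‖(r : ℂ) • A x‖ ^ 2 + ‖Δ x‖ ^ 2 := by
    rw [hA, hΔ, hB.norm_sq_map, norm_smul, norm_smul, norm_inv, Complex.norm_of_nonneg hr0.le,
      mul_pow, mul_pow, hA]
    ring
  obtain ⟨U, U_mem, U_map⟩ := exists_unitary_extension ℂ (X := ((r : ℂ) • A).toLinearMap)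
    (Y := ((r : ℂ)⁻¹ • B).toLinearMap) (X' := (A ∘L T).toLinearMap) (Y' := (B ∘L T).toLinearMap)
    (Δ := Δ.toLinearMap) (fun x => eq_add_of_sub_eq (hΔ x).symm) norm_sq_A_map
  exact exists_lift_of_unitary (fun x => by rw [hA, sub_add_cancel]) U_mem U_map

theorem isPositive_smul_one_sub_sub_iff (c : ℝ) (S T : H →L[ℂ] H) :
    ((c : ℂ) • (1 : H →L[ℂ] H) - adjoint S * S - adjoint T * T).IsPositive ↔
      ∀ x, ‖S x‖ ^ 2 + ‖T x‖ ^ 2 ≤ c * ‖x‖ ^ 2 := by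
  rw [isPositive_iff_complex]
  refine forall_congr' fun x => ?_
  have inner_eq : inner ℂ (((c : ℂ) • (1 : H →L[ℂ] H) - adjoint S * S - adjoint T * T) x) x =
      ((c * ‖x‖ ^ 2 - ‖S x‖ ^ 2 - ‖T x‖ ^ 2 : ℝ) : ℂ) := by
    simp only [sub_apply, smul_apply, one_apply_eq_self, mul_apply_eq_comp, inner_sub_left,
      adjoint_inner_left, inner_smul_left, inner_self_eq_norm_sq_to_K, Complex.conj_ofReal]
    push_cast
    rfl
  rw [inner_eq, RCLike.re_eq_complex_re, Complex.ofReal_re, sub_sub, sub_nonneg]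
  exact and_iff_right rfl

theorem isPositive_pick_iff (hr0 : 0 < r) (hr1 : r ≤ 1) {T T' : H →L[ℂ] H}
    (hTinv : T * T' = 1) (hTinv' : T' * T = 1) :
    (((r⁻¹ ^ 2 + r ^ 2 : ℝ) : ℂ) • (1 : H →L[ℂ] H)
        - adjoint T * T - adjoint T' * T').IsPositive ↔
      ‖T‖ ≤ r⁻¹ ∧ ∀ x, ‖T (T x)‖ ^ 2 + ‖x‖ ^ 2 ≤ (r⁻¹ ^ 2 + r ^ 2) * ‖T x‖ ^ 2 := by
  have left_inv (x : H) : T' (T x) = x := DFunLike.congr_fun hTinv' x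
  have right_inv (x : H) : T (T' x) = x := DFunLike.congr_fun hTinv x
  rw [isPositive_smul_one_sub_sub_iff]
  constructor
  · intro h
    have h_pick_inv (x : H) : ‖T' (T' x)‖ ^ 2 + ‖x‖ ^ 2 ≤ (r⁻¹ ^ 2 + r ^ 2) * ‖T' x‖ ^ 2 := by
      simpa only [right_inv, add_comm] using h (T' x)
    refine ⟨T.opNorm_le_bound (by positivity) fun x => ?_, fun x => ?_⟩
    · rw [le_inv_mul_iff₀ hr0]
      simpa only [left_inv] using mul_norm_le_norm_map hr0 hr1 h_pick_inv (T x)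
    · simpa only [left_inv] using h (T x)
  · rintro ⟨-, h⟩ x
    simpa only [right_inv] using h (T' x)

end PickAnnulus

theorem pick_annulus_lifting_general {H : Type u} [NormedAddCommGroup H] [InnerProductSpace ℂ H]
    [CompleteSpace H] (r : ℝ) (hr0 : 0 < r) (hr1 : r < 1) (T : H →L[ℂ] H) :
    (‖T‖ ≤ r⁻¹ ∧ ∀ x, ‖T (T x)‖ ^ 2 + ‖x‖ ^ 2 ≤ (r⁻¹ ^ 2 + r ^ 2) * ‖T x‖ ^ 2) ↔
      ∃ (K : Type u) (_ : NormedAddCommGroup K) (_ : InnerProductSpace ℂ K)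
        (_ : CompleteSpace K) (J : K →L[ℂ] K) (V : H →L[ℂ] K),
        memPAscript r J ∧ (∀ x, ‖V x‖ = ‖x‖) ∧ V ∘L T = J ∘L V := by
  constructor
  · rintro ⟨h_norm, h_pick⟩
    obtain ⟨B, hB⟩ := exists_isMinusComponent hr0 hr1 h_norm h_pick
    exact ⟨_, _, _, inferInstance, hB.exists_lift hr0⟩
  · rintro ⟨K, _, _, _, J, V, hJ, hV, hVT⟩
    obtain ⟨B, hB⟩ := hJ.exists_isMinusComponent hr0
    have hBV := hB.comp_isometry hV hVT
    exact ⟨hBV.opNorm_le hr0 hr1.le, hBV.norm_sq_map_map_add_norm_sq_le hr0 hr1.le⟩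

/-- An invertible operator `T` lies in the Pick annulus `ℙ𝔸_r[H]` if and only if `T`
lifts to an element `J` of `𝒫𝔸_r`, i.e. there is an isometry `V` with `V T = J V`. -/
theorem pick_annulus_lifting {H : Type u}
    [NormedAddCommGroup H] [InnerProductSpace ℂ H] [CompleteSpace H]
    (r : ℝ) (hr0 : 0 < r) (hr1 : r < 1)
    (T T' : H →L[ℂ] H) (hTinv : T * T' = 1) (hTinv' : T' * T = 1) :
    (((r⁻¹ ^ 2 + r ^ 2 : ℝ) : ℂ) • (1 : H →L[ℂ] H)
        - adjoint T * T - adjoint T' * T').IsPositive ↔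
      ∃ (K : Type u) (_ : NormedAddCommGroup K) (_ : InnerProductSpace ℂ K)
        (_ : CompleteSpace K) (J : K →L[ℂ] K) (V : H →L[ℂ] K),
        memPAscript r J ∧ (∀ x, ‖V x‖ = ‖x‖) ∧ V ∘L T = J ∘L V :=
  (isPositive_pick_iff hr0 hr1.le hTinv hTinv').trans (pick_annulus_lifting_general r hr0 hr1 T)

end
end

section
/- Fix 0 < r < 1. Let H and K be complex Hilbert spaces, let J ∈ 𝒫𝔸_r[H], let F ∈ ℙ𝔸_r[K], and let V : H → K be a linear isometry such that Jⁿ = V* Fⁿ V for every integer n. Then the range of V reduces F; that is, the range of V is invariant under both F and F*. (In other words, every element of 𝒫𝔸_r is dilation extremal in ℙ𝔸_r.) -/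
open ContinuousLinearMap

noncomputable section

/-!
Write `L = range P₊` and `M = range P₋`. Every vector of `M` and of `U L` turns the Pick inequality
for `J` into an equality. Since compressing can only lower `‖F V x‖` and `‖F⁻¹ V x‖`, at such a
vector `x` nothing is lost: `F V x = V J x`, `F⁻¹ V x = V J⁻¹ x`, and `V x` lies in the kernel of
the Pick defect of `F`. The second identity on `U L = J L` says `F V = V J` on `L`, the first says
it on `M`, and `L + M = H`.

For the adjoint let `C = F* V - V J*`. The off-diagonal part of the kernel condition reads
`F* C J x = C (J J*)⁻¹ x`, which on `M` becomes `C U P₋ = r³ F⁻* C P₋`. Because `U*` maps `M` into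
itself, `C P₋ = r³ F⁻* (C P₋) (U* P₋)`; with `‖F⁻¹‖ ≤ r⁻¹` the right-hand side has norm at most
`r² ‖C P₋‖`, so `C P₋ = 0` and `C U P₋ = 0`. The inverse `J⁻¹` is again in `𝒫𝔸_r`, with `U L` in
place of `M`, and the same argument for `J⁻¹` and `F⁻¹` yields `C U P₊ = 0`.
-/

section General

variable {𝕜 E G : Type*}

theorem eq_zero_of_eq_comp_comp [NontriviallyNormedField 𝕜]
    [NormedAddCommGroup E] [NormedSpace 𝕜 E] [NormedAddCommGroup G] [NormedSpace 𝕜 G]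
    {A : G →L[𝕜] G} {B : E →L[𝕜] E} {X : E →L[𝕜] G}
    (hX : X = A ∘L X ∘L B) (hAB : ‖A‖ * ‖B‖ < 1) : X = 0 := by
  have hle : ‖X‖ ≤ ‖A‖ * ‖B‖ * ‖X‖ :=
    calc ‖X‖ = ‖A ∘L X ∘L B‖ := congrArg norm hX
      _ ≤ ‖A‖ * (‖X‖ * ‖B‖) := (opNorm_comp_le _ _).trans (by gcongr; exact opNorm_comp_le _ _)
      _ = ‖A‖ * ‖B‖ * ‖X‖ := by ring
  have hX0 : ‖X‖ = 0 := by nlinarith [norm_nonneg X]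
  exact norm_eq_zero.1 hX0

theorem opNorm_sq_add_inv_sq_le [NontriviallyNormedField 𝕜]
    [NormedAddCommGroup E] [NormedSpace 𝕜 E] {F F' : E →L[𝕜] E} {c : ℝ}
    (hF : 0 < ‖F‖) (hFF' : F * F' = 1) (h : ∀ x, ‖F x‖ ^ 2 + ‖F' x‖ ^ 2 ≤ c * ‖x‖ ^ 2) :
    ‖F‖ ^ 2 + ‖F‖⁻¹ ^ 2 ≤ c := by
  have lower (x : E) : ‖F‖⁻¹ * ‖x‖ ≤ ‖F' x‖ := by
    rw [inv_mul_le_iff₀ hF]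
    simpa [← mul_apply_eq_comp, hFF'] using F.le_opNorm (F' x)
  have upper (x : E) : ‖F x‖ ≤ √(c - ‖F‖⁻¹ ^ 2) * ‖x‖ := by
    rw [← Real.sqrt_sq (norm_nonneg x), ← Real.sqrt_mul' _ (sq_nonneg _)]
    apply Real.le_sqrt_of_sq_le
    have hsq : (‖F‖⁻¹ * ‖x‖) ^ 2 ≤ ‖F' x‖ ^ 2 := by gcongr; exact lower x
    linarith [h x, mul_pow ‖F‖⁻¹ ‖x‖ 2]
  have hsq := (Real.le_sqrt' hF).1 (F.opNorm_le_bound (Real.sqrt_nonneg _) upper)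
  linarith

theorem le_of_sq_add_inv_sq_le {s t : ℝ} (ht : 1 ≤ t)
    (h : s ^ 2 + s⁻¹ ^ 2 ≤ t ^ 2 + t⁻¹ ^ 2) : s ≤ t := by
  by_contra! hts
  have hs : 0 < s := by linarith
  have hts' : 1 < s * t := by nlinarith
  have hdiff : s ^ 2 + s⁻¹ ^ 2 - (t ^ 2 + t⁻¹ ^ 2) =
      (s ^ 2 - t ^ 2) * ((s * t) ^ 2 - 1) / (s * t) ^ 2 := by
    field_simp
    ring
  have hpos : 0 < (s ^ 2 - t ^ 2) * ((s * t) ^ 2 - 1) / (s * t) ^ 2 := by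
    have : 0 < s ^ 2 - t ^ 2 := by nlinarith
    have : 0 < (s * t) ^ 2 - 1 := by nlinarith
    positivity
  linarith

theorem apply_eq_zero_of_isPositive [NormedAddCommGroup E] [InnerProductSpace ℂ E]
    [CompleteSpace E] {T : E →L[ℂ] E} (hT : T.IsPositive) {x : E}
    (hx : RCLike.re (inner ℂ (T x) x) = 0) : T x = 0 := by
  obtain ⟨S, rfl⟩ :=
    CStarAlgebra.nonneg_iff_eq_star_mul_self.1 ((nonneg_iff_isPositive T).2 hT)
  have hSx : S x = 0 := by
    rwa [mul_apply_eq_comp, star_eq_adjoint, adjoint_inner_left, inner_self_eq_norm_sq,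
      sq_eq_zero_iff, norm_eq_zero] at hx
  simp [hSx]

/-- The Pick inequality `‖J x‖² + ‖J' x‖² ≤ c ‖x‖²` holds with equality at the vector `x`. -/
def IsPickSaturated [NontriviallyNormedField 𝕜] [NormedAddCommGroup E] [NormedSpace 𝕜 E]
    (c : ℝ) (J J' : E →L[𝕜] E) (x : E) : Prop :=
  ‖J x‖ ^ 2 + ‖J' x‖ ^ 2 = c * ‖x‖ ^ 2

theorem IsPickSaturated.symm [NontriviallyNormedField 𝕜] [NormedAddCommGroup E] [NormedSpace 𝕜 E]
    {c : ℝ} {J J' : E →L[𝕜] E} {x : E} (hx : IsPickSaturated c J J' x) :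
    IsPickSaturated c J' J x :=
  (add_comm _ _).trans hx

end General

section Dilation

variable {H K : Type*}
  [NormedAddCommGroup H] [InnerProductSpace ℂ H] [CompleteSpace H]
  [NormedAddCommGroup K] [InnerProductSpace ℂ K] [CompleteSpace K]

/-- The Pick defect `c - F*F - F'*F'`, where `F'` plays the role of `F⁻¹`. For
`c = r⁻² + r²` the Pick annulus `ℙ𝔸_r` consists of the invertible `F` with positive defect. -/
def pickDefect (c : ℝ) (F F' : K →L[ℂ] K) : K →L[ℂ] K :=
  (c : ℂ) • (1 : K →L[ℂ] K) - adjoint F * F - adjoint F' * F'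

theorem pickDefect_comm (c : ℝ) (F F' : K →L[ℂ] K) : pickDefect c F F' = pickDefect c F' F :=
  sub_right_comm _ _ _

theorem re_inner_pickDefect (c : ℝ) (F F' : K →L[ℂ] K) (x : K) :
    RCLike.re (inner ℂ (pickDefect c F F' x) x) = c * ‖x‖ ^ 2 - ‖F x‖ ^ 2 - ‖F' x‖ ^ 2 := by
  simp [pickDefect, adjoint_inner_left, ← Complex.ofReal_pow]

/-- The adjoint of the block of `F` mapping `(range V)ᗮ` into `range V`, for an isometry `V`
with `J = V* F V`: in the decomposition `K = range V ⊕ (range V)ᗮ`, the operator `F* V` has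
components `V J*` and `cornerAdjoint J F V`. -/
def cornerAdjoint (J : H →L[ℂ] H) (F : K →L[ℂ] K) (V : H →L[ℂ] K) : H →L[ℂ] K :=
  adjoint F ∘L V - V ∘L adjoint J

theorem adjoint_apply_eq_add_cornerAdjoint (J : H →L[ℂ] H) (F : K →L[ℂ] K) (V : H →L[ℂ] K)
    (x : H) : adjoint F (V x) = V (adjoint J x) + cornerAdjoint J F V x := by
  simp [cornerAdjoint]

/-- `F`, with inverse `F'`, has positive Pick defect and compresses along the isometry `V` to
`J`, with inverse `J'`. Only the powers `±1` of the dilation relation are recorded, which makes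
the notion symmetric under exchanging the operators with their inverses. -/
structure IsPickDilation (c : ℝ) (J J' : H →L[ℂ] H) (F F' : K →L[ℂ] K) (V : H →L[ℂ] K) :
    Prop where
  mul_inv : J * J' = 1
  inv_mul : J' * J = 1
  dilation_mul_inv : F * F' = 1
  dilation_inv_mul : F' * F = 1
  isPositive : (pickDefect c F F').IsPositive
  norm_map : ∀ x, ‖V x‖ = ‖x‖
  eq_compression : J = adjoint V ∘L F ∘L V
  inv_eq_compression : J' = adjoint V ∘L F' ∘L V

namespace IsPickDilation

variable {c : ℝ} {J J' : H →L[ℂ] H} {F F' : K →L[ℂ] K} {V : H →L[ℂ] K}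

theorem symm (h : IsPickDilation c J J' F F' V) : IsPickDilation c J' J F' F V where
  mul_inv := h.inv_mul
  inv_mul := h.mul_inv
  dilation_mul_inv := h.dilation_inv_mul
  dilation_inv_mul := h.dilation_mul_inv
  isPositive := pickDefect_comm c F F' ▸ h.isPositive
  norm_map := h.norm_map
  eq_compression := h.inv_eq_compression
  inv_eq_compression := h.eq_compression

theorem apply_inv_apply (h : IsPickDilation c J J' F F' V) (x : H) : J (J' x) = x :=
  DFunLike.congr_fun h.mul_inv x

theorem dilation_apply_inv_apply (h : IsPickDilation c J J' F F' V) (y : K) : F (F' y) = y :=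
  DFunLike.congr_fun h.dilation_mul_inv y

theorem adjoint_apply_adjoint_inv_apply (h : IsPickDilation c J J' F F' V) (x : H) :
    adjoint J (adjoint J' x) = x := by
  have hadj : star J * star J' = 1 := by rw [← star_mul, h.inv_mul, star_one]
  exact DFunLike.congr_fun hadj x

theorem dilation_adjoint_apply_adjoint_inv_apply (h : IsPickDilation c J J' F F' V) (y : K) :
    adjoint F (adjoint F' y) = y := by
  have hadj : star F * star F' = 1 := by rw [← star_mul, h.dilation_inv_mul, star_one]
  exact DFunLike.congr_fun hadj y

theorem adjoint_apply_self (h : IsPickDilation c J J' F F' V) (x : H) : adjoint V (V x) = x :=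
  DFunLike.congr_fun ((norm_map_iff_adjoint_comp_self V).1 h.norm_map) x

theorem compression_apply (h : IsPickDilation c J J' F F' V) (x : H) :
    adjoint V (F (V x)) = J x :=
  (DFunLike.congr_fun h.eq_compression x).symm

theorem sq_norm_add_sq_norm_le (h : IsPickDilation c J J' F F' V) (y : K) :
    ‖F y‖ ^ 2 + ‖F' y‖ ^ 2 ≤ c * ‖y‖ ^ 2 := by
  have hpos := h.isPositive.re_inner_nonneg_left y
  rw [re_inner_pickDefect] at hpos
  linarith

theorem norm_compression_apply_le (h : IsPickDilation c J J' F F' V) (x : H) :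
    ‖J x‖ ≤ ‖F (V x)‖ := by
  have hV : ‖adjoint V‖ ≤ 1 := by
    rw [LinearIsometryEquiv.norm_map]
    exact V.opNorm_le_bound zero_le_one fun x => by rw [h.norm_map, one_mul]
  rw [← h.compression_apply]
  exact le_of_opNorm_le_of_le _ hV le_rfl |>.trans_eq (one_mul _)

theorem map_apply_of_isPickSaturated (h : IsPickDilation c J J' F F' V) {x : H}
    (hx : IsPickSaturated c J J' x) : F (V x) = V (J x) := by
  apply eq_of_norm_le_re_inner_eq_norm_sq (𝕜 := ℂ)
  · have hF' : ‖J' x‖ ^ 2 ≤ ‖F' (V x)‖ ^ 2 := by gcongr; exact h.symm.norm_compression_apply_le x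
    have hle := h.sq_norm_add_sq_norm_le (V x)
    rw [h.norm_map] at hle ⊢
    exact le_of_sq_le_sq (by linarith [hx.ge]) (norm_nonneg _)
  · rw [← adjoint_inner_left, h.compression_apply, inner_self_eq_norm_sq, h.norm_map]

theorem pickDefect_apply_of_isPickSaturated (h : IsPickDilation c J J' F F' V) {x : H}
    (hx : IsPickSaturated c J J' x) : pickDefect c F F' (V x) = 0 := by
  apply apply_eq_zero_of_isPositive h.isPositive
  rw [re_inner_pickDefect, h.map_apply_of_isPickSaturated hx,
    h.symm.map_apply_of_isPickSaturated hx.symm, h.norm_map, h.norm_map, h.norm_map]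
  linarith [hx.le, hx.ge]

theorem adjoint_apply_cornerAdjoint (h : IsPickDilation c J J' F F' V) (x : H) :
    adjoint V (cornerAdjoint J F V x) = 0 := by
  have hJ : adjoint J = adjoint V ∘L adjoint F ∘L V := by
    simp [h.eq_compression, adjoint_comp, comp_assoc]
  simp [cornerAdjoint, h.adjoint_apply_self, hJ]

theorem adjoint_apply_cornerAdjoint_inv (h : IsPickDilation c J J' F F' V) (x : H) :
    adjoint F (cornerAdjoint J' F' V x) = -cornerAdjoint J F V (adjoint J' x) := by
  simp [cornerAdjoint, h.dilation_adjoint_apply_adjoint_inv_apply,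
    h.adjoint_apply_adjoint_inv_apply]

theorem cornerAdjoint_add_cornerAdjoint_inv_eq_zero (h : IsPickDilation c J J' F F' V) {x : H}
    (hF : F (V x) = V (J x)) (hF' : F' (V x) = V (J' x)) (hx : pickDefect c F F' (V x) = 0) :
    cornerAdjoint J F V (J x) + cornerAdjoint J' F' V (J' x) = 0 := by
  have hsplit : cornerAdjoint J F V (J x) + cornerAdjoint J' F' V (J' x) =
      V ((c : ℂ) • x - adjoint J (J x) - adjoint J' (J' x)) := by
    have hx' : (c : ℂ) • V x - adjoint F (V (J x)) - adjoint F' (V (J' x)) = 0 := by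
      simpa [pickDefect, hF, hF'] using hx
    rw [adjoint_apply_eq_add_cornerAdjoint J F, adjoint_apply_eq_add_cornerAdjoint J' F'] at hx'
    rw [← sub_eq_zero, ← neg_eq_zero, ← hx']
    simp only [map_sub, map_smul]
    abel
  have hzero := congrArg (adjoint V) hsplit
  rw [map_add, h.adjoint_apply_cornerAdjoint, h.symm.adjoint_apply_cornerAdjoint, add_zero,
    h.adjoint_apply_self] at hzero
  rw [hsplit, ← hzero, map_zero]

theorem adjoint_apply_cornerAdjoint_of_isPickSaturated (h : IsPickDilation c J J' F F' V) {x : H}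
    (hx : IsPickSaturated c J J' x) :
    adjoint F (cornerAdjoint J F V (J x)) = cornerAdjoint J F V (adjoint J' (J' x)) := by
  have hsum := h.cornerAdjoint_add_cornerAdjoint_inv_eq_zero (h.map_apply_of_isPickSaturated hx)
    (h.symm.map_apply_of_isPickSaturated hx.symm) (h.pickDefect_apply_of_isPickSaturated hx)
  rw [eq_neg_of_add_eq_zero_left hsum, map_neg, h.adjoint_apply_cornerAdjoint_inv, neg_neg]

theorem opNorm_le_inv {r : ℝ} (h : IsPickDilation (r⁻¹ ^ 2 + r ^ 2) J J' F F' V)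
    (hr0 : 0 < r) (hr1 : r ≤ 1) : ‖F‖ ≤ r⁻¹ := by
  rcases (norm_nonneg F).eq_or_lt with hF | hF
  · rw [← hF]
    positivity
  · apply le_of_sq_add_inv_sq_le ((one_le_inv₀ hr0).2 hr1)
    rw [inv_inv]
    exact opNorm_sq_add_inv_sq_le hF h.dilation_mul_inv h.sq_norm_add_sq_norm_le

end IsPickDilation

/-- The data `P₊, P₋, U` of a presentation `J = U (r P₊ + r⁻¹ P₋)` exhibiting `J` as an element
of `𝒫𝔸_r`; naming the data lets one track how it changes when `J` is inverted. -/
structure IsPAFactorization (r : ℝ) (Pp Pm U J : H →L[ℂ] H) : Prop where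
  projPos : IsOrthProj Pp
  projNeg : IsOrthProj Pm
  add_eq_one : Pp + Pm = 1
  adjoint_mul_self : adjoint U * U = 1
  mul_adjoint_self : U * adjoint U = 1
  projNeg_mul_mul_projPos : Pm * U * Pp = 0
  eq_mul : J = U * ((r : ℂ) • Pp + (r : ℂ)⁻¹ • Pm)

theorem memPAscript.exists_isPAFactorization {r : ℝ} {J : H →L[ℂ] H} (hJ : memPAscript r J) :
    ∃ Pp Pm U : H →L[ℂ] H, IsPAFactorization r Pp Pm U J := by
  obtain ⟨Pp, Pm, U, hPp, hPm, hadd, hU, hU', htri, hJ⟩ := hJ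
  exact ⟨Pp, Pm, U, hPp, hPm, hadd, hU, hU', htri, hJ⟩

theorem IsOrthProj.conj {P W : H →L[ℂ] H} (hP : IsOrthProj P) (hW : adjoint W * W = 1) :
    IsOrthProj (W * P * adjoint W) := by
  refine ⟨hP.1.conjugate W, ?_⟩
  calc W * P * adjoint W * (W * P * adjoint W)
      = W * P * (adjoint W * W) * P * adjoint W := by simp only [mul_assoc]
    _ = W * (P * P) * adjoint W := by rw [hW, mul_one]; simp only [mul_assoc]
    _ = W * P * adjoint W := by rw [hP.2]

theorem IsOrthProj.opNorm_le_one {P : H →L[ℂ] H} (hP : IsOrthProj P) : ‖P‖ ≤ 1 :=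
  IsStarProjection.norm_le P ⟨hP.2, hP.1⟩

namespace IsPAFactorization

variable {r : ℝ} {Pp Pm U J J' : H →L[ℂ] H}

theorem norm_apply (h : IsPAFactorization r Pp Pm U J) (x : H) : ‖U x‖ = ‖x‖ :=
  (norm_map_iff_adjoint_comp_self U).2 h.adjoint_mul_self x

theorem norm_adjoint_apply (h : IsPAFactorization r Pp Pm U J) (x : H) : ‖adjoint U x‖ = ‖x‖ :=
  (norm_map_iff_adjoint_comp_self (adjoint U)).2
    ((adjoint_adjoint U).symm ▸ h.mul_adjoint_self) x

theorem projPos_mul_projNeg (h : IsPAFactorization r Pp Pm U J) : Pp * Pm = 0 := by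
  rw [eq_sub_of_add_eq h.add_eq_one, sub_mul, one_mul, h.projNeg.2, sub_self]

theorem projNeg_mul_projPos (h : IsPAFactorization r Pp Pm U J) : Pm * Pp = 0 := by
  rw [eq_sub_of_add_eq' h.add_eq_one, sub_mul, one_mul, h.projPos.2, sub_self]

theorem projPos_mul_adjoint_mul_projNeg (h : IsPAFactorization r Pp Pm U J) :
    Pp * adjoint U * Pm = 0 := by
  have hstar := congrArg star h.projNeg_mul_mul_projPos
  rwa [star_mul, star_mul, star_zero, h.projPos.1.star_eq, h.projNeg.1.star_eq, ← mul_assoc,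
    star_eq_adjoint] at hstar

theorem projNeg_mul_adjoint_mul_projNeg (h : IsPAFactorization r Pp Pm U J) :
    Pm * adjoint U * Pm = adjoint U * Pm := by
  rw [eq_sub_of_add_eq' h.add_eq_one, sub_mul, one_mul, sub_mul, ← eq_sub_of_add_eq' h.add_eq_one,
    h.projPos_mul_adjoint_mul_projNeg, sub_zero]

theorem smul_add_smul_mul_projPos (h : IsPAFactorization r Pp Pm U J) (a b : ℂ) :
    (a • Pp + b • Pm) * Pp = a • Pp := by
  rw [add_mul, smul_mul_assoc, smul_mul_assoc, h.projPos.2, h.projNeg_mul_projPos, smul_zero,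
    add_zero]

theorem smul_add_smul_mul_projNeg (h : IsPAFactorization r Pp Pm U J) (a b : ℂ) :
    (a • Pp + b • Pm) * Pm = b • Pm := by
  rw [add_mul, smul_mul_assoc, smul_mul_assoc, h.projNeg.2, h.projPos_mul_projNeg, smul_zero,
    zero_add]

theorem mul_projPos (h : IsPAFactorization r Pp Pm U J) : J * Pp = (r : ℂ) • (U * Pp) := by
  rw [h.eq_mul, mul_assoc, h.smul_add_smul_mul_projPos, mul_smul_comm]

theorem mul_projNeg (h : IsPAFactorization r Pp Pm U J) : J * Pm = (r : ℂ)⁻¹ • (U * Pm) := by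
  rw [h.eq_mul, mul_assoc, h.smul_add_smul_mul_projNeg, mul_smul_comm]

theorem inv_eq (h : IsPAFactorization r Pp Pm U J) (hr : r ≠ 0) (hJ'J : J' * J = 1) :
    J' = ((r : ℂ)⁻¹ • Pp + (r : ℂ) • Pm) * adjoint U := by
  have hr' : (r : ℂ) ≠ 0 := by exact_mod_cast hr
  refine left_inv_eq_right_inv hJ'J ?_
  rw [← mul_assoc, mul_add, mul_smul_comm, mul_smul_comm, h.mul_projPos, h.mul_projNeg,
    inv_smul_smul₀ hr', smul_inv_smul₀ hr', ← mul_add, h.add_eq_one, mul_one,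
    h.mul_adjoint_self]

theorem inv (h : IsPAFactorization r Pp Pm U J) (hr : r ≠ 0) (hJ'J : J' * J = 1) :
    IsPAFactorization r (U * Pm * adjoint U) (U * Pp * adjoint U) (adjoint U) J' where
  projPos := h.projNeg.conj h.adjoint_mul_self
  projNeg := h.projPos.conj h.adjoint_mul_self
  add_eq_one := by
    rw [← add_mul, ← mul_add, add_comm Pm, h.add_eq_one, mul_one, h.mul_adjoint_self]
  adjoint_mul_self := by rw [adjoint_adjoint, h.mul_adjoint_self]
  mul_adjoint_self := by rw [adjoint_adjoint, h.adjoint_mul_self]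
  projNeg_mul_mul_projPos :=
    calc U * Pp * adjoint U * adjoint U * (U * Pm * adjoint U)
        = U * (Pp * adjoint U * (adjoint U * U) * Pm) * adjoint U := by simp only [mul_assoc]
      _ = 0 := by rw [h.adjoint_mul_self, mul_one, h.projPos_mul_adjoint_mul_projNeg,
          mul_zero, zero_mul]
  eq_mul := by
    rw [h.inv_eq hr hJ'J]
    simp only [mul_add, add_mul, mul_smul_comm, smul_mul_assoc, ← mul_assoc,
      h.adjoint_mul_self, one_mul]
    exact add_comm _ _

theorem inv_mul_projNeg (h : IsPAFactorization r Pp Pm U J) (hr : r ≠ 0) (hJ'J : J' * J = 1) :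
    J' * Pm = (r : ℂ) • (adjoint U * Pm) := by
  rw [h.inv_eq hr hJ'J, mul_assoc, add_mul, smul_mul_assoc, smul_mul_assoc, ← mul_assoc,
    ← mul_assoc, h.projPos_mul_adjoint_mul_projNeg, h.projNeg_mul_adjoint_mul_projNeg,
    smul_zero, zero_add]

theorem adjoint_inv_eq (h : IsPAFactorization r Pp Pm U J) (hr : r ≠ 0) (hJ'J : J' * J = 1) :
    adjoint J' = U * ((r : ℂ)⁻¹ • Pp + (r : ℂ) • Pm) := by
  have hstar := congrArg star (h.inv_eq hr hJ'J)
  rw [star_mul, star_add, star_smul, star_smul, h.projPos.1.star_eq, h.projNeg.1.star_eq] at hstar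
  simpa [star_eq_adjoint] using hstar

theorem adjoint_inv_mul_projPos (h : IsPAFactorization r Pp Pm U J) (hr : r ≠ 0)
    (hJ'J : J' * J = 1) : adjoint J' * Pp = (r : ℂ)⁻¹ • (U * Pp) := by
  rw [h.adjoint_inv_eq hr hJ'J, mul_assoc, h.smul_add_smul_mul_projPos, mul_smul_comm]

theorem adjoint_inv_mul_projNeg (h : IsPAFactorization r Pp Pm U J) (hr : r ≠ 0)
    (hJ'J : J' * J = 1) : adjoint J' * Pm = (r : ℂ) • (U * Pm) := by
  rw [h.adjoint_inv_eq hr hJ'J, mul_assoc, h.smul_add_smul_mul_projNeg, mul_smul_comm]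

theorem adjoint_inv_mul_inv_mul_projNeg (h : IsPAFactorization r Pp Pm U J) (hr : r ≠ 0)
    (hJ'J : J' * J = 1) : adjoint J' * (J' * Pm) = (r : ℂ) ^ 2 • Pm := by
  rw [h.inv_mul_projNeg hr hJ'J, mul_smul_comm, ← h.projNeg_mul_adjoint_mul_projNeg, mul_assoc,
    ← mul_assoc (adjoint J'), h.adjoint_inv_mul_projNeg hr hJ'J, smul_mul_assoc, mul_assoc,
    ← mul_assoc Pm, h.projNeg_mul_adjoint_mul_projNeg, ← mul_assoc, h.mul_adjoint_self, one_mul,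
    smul_smul, sq]

theorem isPickSaturated_projNeg (h : IsPAFactorization r Pp Pm U J) (hr : r ≠ 0)
    (hJ'J : J' * J = 1) (x : H) :
    IsPickSaturated (r⁻¹ ^ 2 + r ^ 2) J J' (Pm x) := by
  have hJ : J (Pm x) = (r : ℂ)⁻¹ • U (Pm x) := DFunLike.congr_fun h.mul_projNeg x
  have hJ' : J' (Pm x) = (r : ℂ) • adjoint U (Pm x) :=
    DFunLike.congr_fun (h.inv_mul_projNeg hr hJ'J) x
  rw [IsPickSaturated, hJ, hJ', norm_smul, norm_smul, h.norm_apply, h.norm_adjoint_apply,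
    mul_pow, mul_pow, norm_inv, Complex.norm_real, inv_pow, inv_pow, Real.norm_eq_abs,
    sq_abs, add_mul]

end IsPAFactorization

namespace IsPickDilation

variable {r : ℝ} {Pp Pm U J J' : H →L[ℂ] H} {F F' : K →L[ℂ] K} {V : H →L[ℂ] K}

theorem map_apply_projNeg (h : IsPickDilation (r⁻¹ ^ 2 + r ^ 2) J J' F F' V)
    (hJ : IsPAFactorization r Pp Pm U J) (hr : r ≠ 0) (x : H) :
    F (V (Pm x)) = V (J (Pm x)) :=
  h.map_apply_of_isPickSaturated (hJ.isPickSaturated_projNeg hr h.inv_mul x)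

theorem map_apply_projPos (h : IsPickDilation (r⁻¹ ^ 2 + r ^ 2) J J' F F' V)
    (hJ : IsPAFactorization r Pp Pm U J) (hr : r ≠ 0) (x : H) :
    F (V (Pp x)) = V (J (Pp x)) := by
  have hJx : (U * Pp * adjoint U) ((r : ℂ) • U x) = J (Pp x) := by
    have hUx : adjoint U (U x) = x := DFunLike.congr_fun hJ.adjoint_mul_self x
    have hJPx : J (Pp x) = (r : ℂ) • U (Pp x) := DFunLike.congr_fun hJ.mul_projPos x
    simp [hUx, hJPx]
  have hinv := h.symm.map_apply_projNeg (hJ.inv hr h.inv_mul) hr ((r : ℂ) • U x)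
  rw [hJx, h.symm.apply_inv_apply] at hinv
  rw [← hinv, h.dilation_apply_inv_apply]

theorem map_apply (h : IsPickDilation (r⁻¹ ^ 2 + r ^ 2) J J' F F' V)
    (hJ : IsPAFactorization r Pp Pm U J) (hr : r ≠ 0) (x : H) : F (V x) = V (J x) := by
  have hx : Pp x + Pm x = x := DFunLike.congr_fun hJ.add_eq_one x
  rw [← hx]
  simp only [map_add, h.map_apply_projPos hJ hr, h.map_apply_projNeg hJ hr]

theorem cornerAdjoint_apply_unitary_projNeg (h : IsPickDilation (r⁻¹ ^ 2 + r ^ 2) J J' F F' V)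
    (hJ : IsPAFactorization r Pp Pm U J) (hr : r ≠ 0) (x : H) :
    cornerAdjoint J F V (U (Pm x)) =
      (r : ℂ) ^ 3 • adjoint F' (cornerAdjoint J F V (Pm x)) := by
  have hr' : (r : ℂ) ≠ 0 := by exact_mod_cast hr
  have hJx : J (Pm x) = (r : ℂ)⁻¹ • U (Pm x) := DFunLike.congr_fun hJ.mul_projNeg x
  have hJJx : adjoint J' (J' (Pm x)) = (r : ℂ) ^ 2 • Pm x :=
    DFunLike.congr_fun (hJ.adjoint_inv_mul_inv_mul_projNeg hr h.inv_mul) x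
  have hrel := congrArg (adjoint F')
    (h.adjoint_apply_cornerAdjoint_of_isPickSaturated (hJ.isPickSaturated_projNeg hr h.inv_mul x))
  rw [h.symm.dilation_adjoint_apply_adjoint_inv_apply, hJx, hJJx, map_smul, map_smul, map_smul,
    inv_smul_eq_iff₀ hr', smul_smul, ← pow_succ'] at hrel
  exact hrel

theorem cornerAdjoint_comp_projNeg (h : IsPickDilation (r⁻¹ ^ 2 + r ^ 2) J J' F F' V)
    (hJ : IsPAFactorization r Pp Pm U J) (hr0 : 0 < r) (hr1 : r < 1) :
    cornerAdjoint J F V ∘L Pm = 0 := by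
  have hfix : cornerAdjoint J F V ∘L Pm =
      ((r : ℂ) ^ 3 • adjoint F') ∘L (cornerAdjoint J F V ∘L Pm) ∘L (adjoint U * Pm) := by
    ext x
    have hU : U (Pm (adjoint U (Pm x))) = Pm x := by
      have hmul := congrArg (U * ·) hJ.projNeg_mul_adjoint_mul_projNeg
      simp only [← mul_assoc, hJ.mul_adjoint_self, one_mul] at hmul
      exact DFunLike.congr_fun hmul x
    have hstep := h.cornerAdjoint_apply_unitary_projNeg hJ hr0.ne' (adjoint U (Pm x))
    rw [hU] at hstep
    exact hstep
  apply eq_zero_of_eq_comp_comp hfix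
  have hA : ‖(r : ℂ) ^ 3 • adjoint F'‖ ≤ r ^ 2 :=
    calc ‖(r : ℂ) ^ 3 • adjoint F'‖ = r ^ 3 * ‖F'‖ := by
          rw [norm_smul, norm_pow, Complex.norm_real, Real.norm_of_nonneg hr0.le,
            LinearIsometryEquiv.norm_map]
      _ ≤ r ^ 3 * r⁻¹ := by gcongr; exact h.symm.opNorm_le_inv hr0 hr1.le
      _ = r ^ 2 := by field_simp
  have hB : ‖adjoint U * Pm‖ ≤ 1 :=
    opNorm_le_bound _ zero_le_one fun x =>
      (hJ.norm_adjoint_apply (Pm x)).trans_le (Pm.le_of_opNorm_le hJ.projNeg.opNorm_le_one x)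
  calc ‖(r : ℂ) ^ 3 • adjoint F'‖ * ‖adjoint U * Pm‖ ≤ r ^ 2 * 1 := by gcongr
    _ < 1 := by nlinarith

theorem cornerAdjoint_apply_unitary_projNeg_eq_zero
    (h : IsPickDilation (r⁻¹ ^ 2 + r ^ 2) J J' F F' V)
    (hJ : IsPAFactorization r Pp Pm U J) (hr0 : 0 < r) (hr1 : r < 1) (x : H) :
    cornerAdjoint J F V (U (Pm x)) = 0 := by
  have hneg : cornerAdjoint J F V (Pm x) = 0 :=
    DFunLike.congr_fun (h.cornerAdjoint_comp_projNeg hJ hr0 hr1) x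
  rw [h.cornerAdjoint_apply_unitary_projNeg hJ hr0.ne', hneg, map_zero, smul_zero]

theorem cornerAdjoint_apply_unitary_projPos_eq_zero
    (h : IsPickDilation (r⁻¹ ^ 2 + r ^ 2) J J' F F' V)
    (hJ : IsPAFactorization r Pp Pm U J) (hr0 : 0 < r) (hr1 : r < 1) (x : H) :
    cornerAdjoint J F V (U (Pp x)) = 0 := by
  have hr' : (r : ℂ) ≠ 0 := by exact_mod_cast hr0.ne'
  have hinv : cornerAdjoint J' F' V (Pp x) = 0 := by
    have hUx (y : H) : adjoint U (U y) = y := DFunLike.congr_fun hJ.adjoint_mul_self y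
    simpa [hUx] using h.symm.cornerAdjoint_apply_unitary_projNeg_eq_zero
      (hJ.inv hr0.ne' h.inv_mul) hr0 hr1 (U x)
  have hJx : adjoint J' (Pp x) = (r : ℂ)⁻¹ • U (Pp x) :=
    DFunLike.congr_fun (hJ.adjoint_inv_mul_projPos hr0.ne' h.inv_mul) x
  have hrel := h.adjoint_apply_cornerAdjoint_inv (Pp x)
  rw [hinv, map_zero, hJx, map_smul, eq_comm, neg_eq_zero] at hrel
  exact (smul_eq_zero_iff_right (inv_ne_zero hr')).1 hrel

theorem adjoint_map_apply (h : IsPickDilation (r⁻¹ ^ 2 + r ^ 2) J J' F F' V)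
    (hJ : IsPAFactorization r Pp Pm U J) (hr0 : 0 < r) (hr1 : r < 1) (x : H) :
    adjoint F (V x) = V (adjoint J x) := by
  have hx : U (Pp (adjoint U x)) + U (Pm (adjoint U x)) = x := by
    rw [← map_add, ← add_apply, hJ.add_eq_one]
    exact DFunLike.congr_fun hJ.mul_adjoint_self x
  have hcorner : cornerAdjoint J F V x = 0 := by
    rw [← hx, map_add, h.cornerAdjoint_apply_unitary_projPos_eq_zero hJ hr0 hr1,
      h.cornerAdjoint_apply_unitary_projNeg_eq_zero hJ hr0 hr1, add_zero]
  rw [adjoint_apply_eq_add_cornerAdjoint J, hcorner, add_zero]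

end IsPickDilation

theorem pa_script_dilation_extremal_general
    (r : ℝ) (hr0 : 0 < r) (hr1 : r < 1)
    (J J' : H →L[ℂ] H) (hJinv : J * J' = 1) (hJinv' : J' * J = 1)
    (hJ : memPAscript r J)
    (F F' : K →L[ℂ] K) (hFinv : F * F' = 1) (hFinv' : F' * F = 1)
    (hFpick : (((r⁻¹ ^ 2 + r ^ 2 : ℝ) : ℂ) • (1 : K →L[ℂ] K)
      - adjoint F * F - adjoint F' * F').IsPositive)
    (V : H →L[ℂ] K) (hV : ∀ x, ‖V x‖ = ‖x‖)
    (hdil : J = adjoint V ∘L F ∘L V) (hdil' : J' = adjoint V ∘L F' ∘L V) :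
    (∀ y ∈ Set.range V, F y ∈ Set.range V) ∧
      (∀ y ∈ Set.range V, adjoint F y ∈ Set.range V) := by
  have h : IsPickDilation (r⁻¹ ^ 2 + r ^ 2) J J' F F' V :=
    ⟨hJinv, hJinv', hFinv, hFinv', hFpick, hV, hdil, hdil'⟩
  obtain ⟨Pp, Pm, U, hJ⟩ := hJ.exists_isPAFactorization
  constructor
  · rintro _ ⟨x, rfl⟩
    exact ⟨J x, (h.map_apply hJ hr0.ne' x).symm⟩
  · rintro _ ⟨x, rfl⟩
    exact ⟨adjoint J x, (h.adjoint_map_apply hJ hr0 hr1 x).symm⟩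

end Dilation

/-- Every element of `𝒫𝔸_r` is dilation extremal in the Pick annulus `ℙ𝔸_r`: any
`ℂ[x,x⁻¹]`-dilation of `J ∈ 𝒫𝔸_r` to an element `F ∈ ℙ𝔸_r` is trivial, i.e. the range
of the isometry `V` reduces `F`. -/
theorem pa_script_dilation_extremal {H K : Type*}
    [NormedAddCommGroup H] [InnerProductSpace ℂ H] [CompleteSpace H]
    [NormedAddCommGroup K] [InnerProductSpace ℂ K] [CompleteSpace K]
    (r : ℝ) (hr0 : 0 < r) (hr1 : r < 1)
    (J J' : H →L[ℂ] H) (hJinv : J * J' = 1) (hJinv' : J' * J = 1)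
    (hJ : memPAscript r J)
    (F F' : K →L[ℂ] K) (hFinv : F * F' = 1) (hFinv' : F' * F = 1)
    (hFpick : (((r⁻¹ ^ 2 + r ^ 2 : ℝ) : ℂ) • (1 : K →L[ℂ] K)
      - adjoint F * F - adjoint F' * F').IsPositive)
    (V : H →L[ℂ] K) (hV : ∀ x, ‖V x‖ = ‖x‖)
    (hdil : ∀ n : ℕ, J ^ n = adjoint V ∘L (F ^ n) ∘L V ∧
      J' ^ n = adjoint V ∘L (F' ^ n) ∘L V) :
    (∀ y ∈ Set.range V, F y ∈ Set.range V) ∧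
      (∀ y ∈ Set.range V, adjoint F y ∈ Set.range V) := by
  exact pa_script_dilation_extremal_general r hr0 hr1 J J' hJinv hJinv' hJ F F' hFinv hFinv' hFpick
    V hV (by simpa only [pow_one] using (hdil 1).1) (by simpa only [pow_one] using (hdil 1).2)

end
end
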